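/- Let R be a finitely generated ℕ-graded k-algebra of Krull dimension d, and let I be a homogeneous ideal with R/I of finite length such that the R-module R/I has finite projective dimension. Set b_{α,j} = λ_k(Tor_α^R(k, R/I)_j), 𝔹(j) = Σ_{α=0}^{∞} (−1)^α b_{α,j}, and let b be the smallest integer such that 𝔹(j) = 0 for all j > b. Then for every nonzero complex number y, F(R,R,I)(y) = e_R · (Σ_{j=0}^{b} 𝔹(j) e^{−iyj}) / (iy)^d, where e_R is the Hilbert–Samuel multiplicity of R. -/

import Mathlib

open Filter Complex

noncomputable section

/-- The Frobenius bracket power `I^{[q]}` of an ideal. -/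
def bracketPow {R : Type*} [CommSemiring R] (I : Ideal R) (q : ℕ) : Ideal R :=
  Ideal.span ((fun x : R => x ^ q) '' (I : Set R))

/-- The map induced by an `R`-linear map on the quotients by `J • ⊤`. -/
def inducedQuot {R A B : Type*} [CommRing R] [AddCommGroup A] [Module R A]
    [AddCommGroup B] [Module R B] (J : Ideal R) (f : A →ₗ[R] B) :
    (A ⧸ (J • ⊤ : Submodule R A)) →ₗ[R] B ⧸ (J • ⊤ : Submodule R B) :=
  Submodule.mapQ _ _ f (by
    rw [← Submodule.map_le_iff_le_comap, Submodule.map_smul'']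
    exact Submodule.smul_mono le_rfl le_top)

/-- Degree-`j` cycles at homological spot `i` of the complex `F_• ⧸ J F_•` obtained from a
graded free resolution `(F, ℱ, dF)`. -/
def cyclesPiece (k : Type*) {R : Type*} [Field k] [CommRing R] [Algebra k R]
    (F : ℕ → Type) [∀ i, AddCommGroup (F i)] [∀ i, Module R (F i)]
    [∀ i, Module k (F i)] [∀ i, IsScalarTower k R (F i)]
    (ℱ : ∀ i, ℤ → Submodule k (F i))
    (dF : ∀ i, F (i + 1) →ₗ[R] F i)
    (J : Ideal R) (i : ℕ) (j : ℤ) : Submodule k (F i ⧸ (J • ⊤ : Submodule R (F i))) :=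
  match i with
  | 0 => (ℱ 0 j).map (((J • ⊤ : Submodule R (F 0)).mkQ).restrictScalars k)
  | (i' + 1) =>
      (ℱ (i' + 1) j).map (((J • ⊤ : Submodule R (F (i' + 1))).mkQ).restrictScalars k) ⊓
        (LinearMap.ker (inducedQuot J (dF i'))).restrictScalars k

/-- Degree-`j` boundaries at homological spot `i` of the complex `F_• ⧸ J F_•`. -/
def boundariesPiece (k : Type*) {R : Type*} [Field k] [CommRing R] [Algebra k R]
    (F : ℕ → Type) [∀ i, AddCommGroup (F i)] [∀ i, Module R (F i)]
    [∀ i, Module k (F i)] [∀ i, IsScalarTower k R (F i)]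
    (ℱ : ∀ i, ℤ → Submodule k (F i))
    (dF : ∀ i, F (i + 1) →ₗ[R] F i)
    (J : Ideal R) (i : ℕ) (j : ℤ) : Submodule k (F i ⧸ (J • ⊤ : Submodule R (F i))) :=
  (ℱ i j).map (((J • ⊤ : Submodule R (F i)).mkQ).restrictScalars k) ⊓
    (LinearMap.range (inducedQuot J (dF i))).restrictScalars k

/-- `λ_k(Tor_i^R(M, R/J)_j)`, computed from a graded free resolution `(F, ℱ, dF)` of `M`
as the dimension of degree-`j` cycles minus the dimension of degree-`j` boundaries of
`F_• ⧸ J F_•` at spot `i`. -/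
def torPieceDim (k : Type*) {R : Type*} [Field k] [CommRing R] [Algebra k R]
    (F : ℕ → Type) [∀ i, AddCommGroup (F i)] [∀ i, Module R (F i)]
    [∀ i, Module k (F i)] [∀ i, IsScalarTower k R (F i)]
    (ℱ : ∀ i, ℤ → Submodule k (F i))
    (dF : ∀ i, F (i + 1) →ₗ[R] F i)
    (J : Ideal R) (i : ℕ) (j : ℤ) : ℕ :=
  Module.finrank k (cyclesPiece k F ℱ dF J i j) -
    Module.finrank k (boundariesPiece k F ℱ dF J i j)

/-- The alternating sum `Σ_α (-1)^α λ_k(Tor_α(R/J ⊗ -)_j)` of graded Betti-type numbers. -/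
def torAltSum (k : Type*) {R : Type*} [Field k] [CommRing R] [Algebra k R]
    (F : ℕ → Type) [∀ i, AddCommGroup (F i)] [∀ i, Module R (F i)]
    [∀ i, Module k (F i)] [∀ i, IsScalarTower k R (F i)]
    (ℱ : ∀ i, ℤ → Submodule k (F i))
    (dF : ∀ i, F (i + 1) →ₗ[R] F i)
    (J : Ideal R) (j : ℤ) : ℂ :=
  ∑' α : ℕ, (-1 : ℂ) ^ α * (torPieceDim k F ℱ dF J α j : ℂ)

/-- `p^{-nd} Σ_{j∈ℤ} λ_k((R/I^{[pⁿ]})_j) e^{-iyj/pⁿ}`. -/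
def FnGen (k : Type*) {R M : Type*} [Field k] [CommRing R] [Algebra k R]
    [AddCommGroup M] [Module R M] [Module k M] [IsScalarTower k R M]
    (ℳ : ℤ → Submodule k M) (I : Ideal R) (p d n : ℕ) (y : ℂ) : ℂ :=
  (1 / (p : ℂ) ^ n) ^ d *
    ∑' j : ℤ, (Module.finrank k ((ℳ j).map
        (((bracketPow I (p ^ n) • ⊤ : Submodule R M)).mkQ.restrictScalars k)) : ℂ) *
      Complex.exp (-Complex.I * y * (j : ℂ) / (p : ℂ) ^ n)

/-- Hilbert–Samuel sequence `d!·n^{-d}·Σ_{j ≤ n} λ_k(R_j)`. -/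
def hsSeq (k : Type*) {R : Type*} [Field k] [AddCommGroup R] [Module k R]
    (𝒜 : ℤ → Submodule k R) (d n : ℕ) : ℝ :=
  (d.factorial : ℝ) / (n : ℝ) ^ d *
    ∑' j : ℤ, (if j ≤ (n : ℤ) then (Module.finrank k (𝒜 j) : ℝ) else 0)

/-!
Let `r` be the least spot from which on `N ⊗ F_•` is exact for every module `N`, where `F_•` is the
finite free resolution of `R/I`. There are `r` elements of the irrelevant ideal whose `q`-th powers
form a regular sequence in `R`; they are regular on `R` viewed as a module over itself through the
Frobenius `x ↦ x ^ q`, so `F_•` stays exact after base change along it. Counting dimensions in the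
base-changed resolution gives `λ((R/I^{[q]})_j) = ∑ₜ 𝔹(t) λ(R_{j - qt})`: the generating function of
`R/I^{[q]}` is `𝔹(z ^ q) H(z)`, with `𝔹(z) = ∑ₜ 𝔹(t) z ^ t` and `H` the Hilbert series of `R`.

Abel's theorem turns the Hilbert–Samuel limit into `(1 - z) ^ d H(z) → e` as `z → 1⁻` along the
reals. Unless `𝔹 = 0`, the case `q = 1` exhibits `H` as a quotient of Laurent polynomials, hence
meromorphic at `1`, so the limit holds along complex `z → 1`. Evaluating at `z = exp(-iy/q)`, where
`z ^ q = exp(-iy)` and `q (1 - z) → iy`, gives the formula. The same identity for `q = 1` shows that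
`𝔹` vanishes in negative degrees.
-/

namespace FrobeniusPoincare

/-! ### Acyclicity and regular sequences -/

section Acyclicity

open TensorProduct RingTheory.Sequence
open scoped Pointwise

universe u v

variable {R : Type u} [CommRing R]

theorem lTensor_rTensor_apply {M M' N N' : Type*} [AddCommGroup M] [Module R M] [AddCommGroup M']
    [Module R M'] [AddCommGroup N] [Module R N] [AddCommGroup N'] [Module R N']
    (f : N →ₗ[R] N') (g : M →ₗ[R] M') (z : N ⊗[R] M) :
    g.lTensor N' (f.rTensor M z) = f.rTensor M' (g.lTensor N z) := by
  rw [← LinearMap.comp_apply, ← LinearMap.comp_apply, LinearMap.lTensor_comp_rTensor,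
    LinearMap.rTensor_comp_lTensor]

variable {F : ℕ → Type v} [∀ i, AddCommGroup (F i)] [∀ i, Module R (F i)]
  {dF : ∀ i, F (i + 1) →ₗ[R] F i} {i : ℕ}

theorem lTensor_d_d_apply (hd : ∀ i, dF i ∘ₗ dF (i + 1) = 0) {N : Type*} [AddCommGroup N]
    [Module R N] (z : N ⊗[R] F (i + 2)) :
    (dF i).lTensor N ((dF (i + 1)).lTensor N z) = 0 := by
  rw [← LinearMap.lTensor_comp_apply, hd, LinearMap.lTensor_zero, LinearMap.zero_apply]

/-- Exactness at the spot `i + 1` of the complex `N ⊗ F_•`; there is no condition at spot `0`. -/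
def TensorExactAt (dF : ∀ i, F (i + 1) →ₗ[R] F i) (i : ℕ) (N : Type*) [AddCommGroup N]
    [Module R N] : Prop :=
  Function.Exact ((dF (i + 1)).lTensor N) ((dF i).lTensor N)

/-- Multiplication by `a` is null-homotopic at the spot `i + 1` of the complex `F_•`. -/
def NullHomotopicAt (dF : ∀ i, F (i + 1) →ₗ[R] F i) (i : ℕ) (a : R) : Prop :=
  ∃ (s : F (i + 1) →ₗ[R] F (i + 2)) (t : F i →ₗ[R] F (i + 1)),
    dF (i + 1) ∘ₗ s + t ∘ₗ dF i = a • LinearMap.id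

namespace TensorExactAt

theorem of_forall_exists {N : Type*} [AddCommGroup N] [Module R N]
    (hd : ∀ i, dF i ∘ₗ dF (i + 1) = 0)
    (h : ∀ z : N ⊗[R] F (i + 1), (dF i).lTensor N z = 0 → ∃ w, (dF (i + 1)).lTensor N w = z) :
    TensorExactAt dF i N := by
  refine fun z ↦ ⟨h z, ?_⟩
  rintro ⟨w, rfl⟩
  exact lTensor_d_d_apply hd w

theorem of_subsingleton (N : Type*) [AddCommGroup N] [Module R N] [Subsingleton (N ⊗[R] F (i + 1))]
    (hd : ∀ i, dF i ∘ₗ dF (i + 1) = 0) : TensorExactAt dF i N :=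
  of_forall_exists hd fun _ _ ↦ ⟨0, Subsingleton.elim _ _⟩

variable {N N₁ N₂ N₃ : Type*} [AddCommGroup N] [Module R N] [AddCommGroup N₁] [Module R N₁]
  [AddCommGroup N₂] [Module R N₂] [AddCommGroup N₃] [Module R N₃]

theorem congr (e : N₁ ≃ₗ[R] N₂) (h : TensorExactAt dF i N₁) : TensorExactAt dF i N₂ :=
  (Function.Exact.iff_of_ladder_linearEquiv (e₁ := e.rTensor (F (i + 2)))
    (e₂ := e.rTensor (F (i + 1))) (e₃ := e.rTensor (F i))
    (LinearMap.ext fun z ↦ lTensor_rTensor_apply (e : N₁ →ₗ[R] N₂) (dF (i + 1)) z)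
    (LinearMap.ext fun z ↦ lTensor_rTensor_apply (e : N₁ →ₗ[R] N₂) (dF i) z)).2 h

theorem of_exact_self (h : Function.Exact (dF (i + 1)) (dF i)) : TensorExactAt dF i R :=
  (Function.Exact.iff_of_ladder_linearEquiv (e₁ := TensorProduct.lid R (F (i + 2)))
    (e₂ := TensorProduct.lid R (F (i + 1))) (e₃ := TensorProduct.lid R (F i))
    (by ext; simp) (by ext; simp)).1 h

section ShortExact

variable [∀ i, Module.Flat R (F i)] {f : N₁ →ₗ[R] N₂} {g : N₂ →ₗ[R] N₃}

theorem middle (hd : ∀ i, dF i ∘ₗ dF (i + 1) = 0) (hf : Function.Injective f)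
    (hfg : Function.Exact f g) (hg : Function.Surjective g)
    (h₁ : TensorExactAt dF i N₁) (h₃ : TensorExactAt dF i N₃) : TensorExactAt dF i N₂ := by
  refine of_forall_exists hd fun z hz ↦ ?_
  obtain ⟨w₃, hw₃⟩ := (h₃ (g.rTensor _ z)).1 (by rw [lTensor_rTensor_apply, hz, map_zero])
  obtain ⟨w₂, rfl⟩ := g.rTensor_surjective _ hg w₃
  obtain ⟨z₁, hz₁⟩ := (rTensor_exact _ hfg hg (z - (dF (i + 1)).lTensor N₂ w₂)).1 <| by
    rw [map_sub, ← lTensor_rTensor_apply, hw₃, sub_self]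
  obtain ⟨w₁, rfl⟩ := (h₁ z₁).1 <| by
    apply Module.Flat.rTensor_preserves_injective_linearMap (M := F i) f hf
    rw [← lTensor_rTensor_apply, hz₁, map_sub, hz, lTensor_d_d_apply hd, sub_zero, map_zero]
  exact ⟨f.rTensor _ w₁ + w₂, by rw [map_add, lTensor_rTensor_apply, hz₁, sub_add_cancel]⟩

theorem exists_of_exists_rTensor (hd : ∀ i, dF i ∘ₗ dF (i + 1) = 0) (hf : Function.Injective f)
    (hfg : Function.Exact f g) (hg : Function.Surjective g) (h₃ : TensorExactAt dF (i + 1) N₃)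
    {z : N₁ ⊗[R] F (i + 1)} (hz : ∃ w, (dF (i + 1)).lTensor N₂ w = f.rTensor _ z) :
    ∃ w, (dF (i + 1)).lTensor N₁ w = z := by
  obtain ⟨w₂, hw₂⟩ := hz
  obtain ⟨u₃, hu₃⟩ := (h₃ (g.rTensor _ w₂)).1 <| by
    rw [lTensor_rTensor_apply, hw₂]
    exact (rTensor_exact _ hfg hg).apply_apply_eq_zero z
  obtain ⟨u₂, rfl⟩ := g.rTensor_surjective _ hg u₃
  obtain ⟨w₁, hw₁⟩ := (rTensor_exact _ hfg hg (w₂ - (dF (i + 2)).lTensor N₂ u₂)).1 <| by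
    rw [map_sub, ← lTensor_rTensor_apply, hu₃, sub_self]
  refine ⟨w₁, Module.Flat.rTensor_preserves_injective_linearMap (M := F (i + 1)) f hf ?_⟩
  rw [← lTensor_rTensor_apply, hw₁, map_sub, lTensor_d_d_apply hd, hw₂, sub_zero]

theorem left (hd : ∀ i, dF i ∘ₗ dF (i + 1) = 0) (hf : Function.Injective f)
    (hfg : Function.Exact f g) (hg : Function.Surjective g)
    (h₂ : TensorExactAt dF i N₂) (h₃ : TensorExactAt dF (i + 1) N₃) : TensorExactAt dF i N₁ :=
  of_forall_exists hd fun z hz ↦ exists_of_exists_rTensor hd hf hfg hg h₃ <|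
    (h₂ _).1 (by rw [lTensor_rTensor_apply, hz, map_zero])

theorem right (hd : ∀ i, dF i ∘ₗ dF (i + 1) = 0) (hf : Function.Injective f)
    (hfg : Function.Exact f g) (hg : Function.Surjective g)
    (h₁ : TensorExactAt dF i N₁) (h₂ : TensorExactAt dF (i + 1) N₂) :
    TensorExactAt dF (i + 1) N₃ := by
  refine of_forall_exists hd fun z₃ hz₃ ↦ ?_
  obtain ⟨z₂, rfl⟩ := g.rTensor_surjective _ hg z₃
  obtain ⟨z₁, hz₁⟩ := (rTensor_exact _ hfg hg _).1 ((lTensor_rTensor_apply g _ z₂).symm.trans hz₃)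
  obtain ⟨w₁, rfl⟩ := (h₁ z₁).1 <| by
    apply Module.Flat.rTensor_preserves_injective_linearMap (M := F i) f hf
    rw [← lTensor_rTensor_apply, hz₁, lTensor_d_d_apply hd, map_zero]
  obtain ⟨w₂, hw₂⟩ := (h₂ (z₂ - f.rTensor _ w₁)).1 <| by
    rw [map_sub, lTensor_rTensor_apply f, hz₁, sub_self]
  refine ⟨g.rTensor _ w₂, ?_⟩
  rw [lTensor_rTensor_apply, hw₂, map_sub, (rTensor_exact _ hfg hg).apply_apply_eq_zero w₁,
    sub_zero]

theorem exists_of_exists_pow_smul {x : R} (hd : ∀ i, dF i ∘ₗ dF (i + 1) = 0)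
    (hx : IsSMulRegular N x) (h : TensorExactAt dF (i + 1) (QuotSMulTop x N)) (m : ℕ)
    {z : N ⊗[R] F (i + 1)} (hz : ∃ w, (dF (i + 1)).lTensor N w = x ^ m • z) :
    ∃ w, (dF (i + 1)).lTensor N w = z := by
  induction m with
  | zero => simpa using hz
  | succ m ih =>
    refine ih (exists_of_exists_rTensor hd (f := LinearMap.lsmul R N x) hx
      (LinearMap.exact_lsmul_mkQ_smul_top N x) (Submodule.mkQ_surjective _) h ?_)
    have hsmul : LinearMap.lsmul R N x = x • LinearMap.id := rfl
    simpa only [hsmul, LinearMap.rTensor_smul, LinearMap.rTensor_id, LinearMap.smul_apply,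
      LinearMap.id_apply, smul_smul, ← pow_succ'] using hz

/-- Some power of `x` kills the homology, on which multiplication by `x` is injective because the
homology of `N / xN` vanishes one spot higher. -/
theorem of_isSMulRegular {x : R} (hd : ∀ i, dF i ∘ₗ dF (i + 1) = 0)
    (hnull : ∃ m, NullHomotopicAt dF i (x ^ m)) (hx : IsSMulRegular N x)
    (h : TensorExactAt dF (i + 1) (QuotSMulTop x N)) : TensorExactAt dF i N := by
  obtain ⟨m, s, t, hst⟩ := hnull
  refine of_forall_exists hd fun z hz ↦ exists_of_exists_pow_smul hd hx h m ⟨s.lTensor N z, ?_⟩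
  have := congrArg (fun φ ↦ φ.lTensor N z) hst
  simpa [LinearMap.lTensor_add, LinearMap.lTensor_comp, hz] using this

end ShortExact

variable [∀ i, Module.Flat R (F i)]

theorem quotient_ofList (hd : ∀ i, dF i ∘ₗ dF (i + 1) = 0) (xs : List R) :
    ∀ (N : Type*) [AddCommGroup N] [Module R N] (m : ℕ), IsWeaklyRegular N xs →
      (∀ i, m ≤ i → TensorExactAt dF i N) →
      ∀ i, m + xs.length ≤ i → TensorExactAt dF i (N ⧸ (Ideal.ofList xs • ⊤ : Submodule R N)) := by
  induction xs with
  | nil =>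
    intro N _ _ m _ h i hi
    exact (h i (by simpa using hi)).congr (Submodule.quotEquivOfEqBot _ (by simp)).symm
  | cons x xs ih =>
    intro N _ _ m hreg h i hi
    rw [isWeaklyRegular_cons_iff] at hreg
    rw [List.length_cons] at hi
    refine (ih (QuotSMulTop x N) (m + 1) hreg.2 ?_ i (by omega)).congr
      (Submodule.quotOfListConsSMulTopEquivQuotSMulTopInner N x xs).symm
    rintro (_ | i) hi
    · omega
    · exact right hd (f := LinearMap.lsmul R N x) hreg.1 (LinearMap.exact_lsmul_mkQ_smul_top N x)
        (Submodule.mkQ_surjective _) (h i (by omega)) (h (i + 1) (by omega))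

theorem of_isWeaklyRegular (hd : ∀ i, dF i ∘ₗ dF (i + 1) = 0) (r : ℕ)
    (hr : ∀ (N : Type u) [AddCommGroup N] [Module R N] (i : ℕ), r ≤ i → TensorExactAt dF i N)
    (xs : List R) (hnull : ∀ x ∈ xs, ∀ i, ∃ m, NullHomotopicAt dF i (x ^ m)) :
    ∀ (N : Type u) [AddCommGroup N] [Module R N], IsWeaklyRegular N xs →
      ∀ i, r ≤ i + xs.length → TensorExactAt dF i N := by
  induction xs with
  | nil => exact fun N _ _ _ i hi ↦ hr N i (by simpa using hi)
  | cons x xs ih =>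
    intro N _ _ hreg i hi
    rw [isWeaklyRegular_cons_iff] at hreg
    rw [List.length_cons] at hi
    exact of_isSMulRegular hd (hnull x (by simp) i) hreg.1 <|
      ih (fun y hy ↦ hnull y (by simp [hy])) _ hreg.2 (i + 1) (by omega)

theorem of_forall_finite (hd : ∀ i, dF i ∘ₗ dF (i + 1) = 0)
    (h : ∀ (N : Type u) [AddCommGroup N] [Module R N] [Module.Finite R N], TensorExactAt dF i N)
    (N : Type u) [AddCommGroup N] [Module R N] : TensorExactAt dF i N := by
  refine of_forall_exists hd fun z hz ↦ ?_
  obtain ⟨N₀, _, hN₀⟩ :=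
    TensorProduct.exists_finite_submodule_left_of_setFinite {z} (Set.finite_singleton z)
  obtain ⟨z₀, rfl⟩ := hN₀ rfl
  obtain ⟨w₀, rfl⟩ := (h N₀ z₀).1 <| by
    apply Module.Flat.rTensor_preserves_injective_linearMap (M := F i) _ N₀.injective_subtype
    rw [← lTensor_rTensor_apply, hz, map_zero]
  exact ⟨N₀.subtype.rTensor _ w₀, lTensor_rTensor_apply _ _ _⟩

theorem of_residueField [IsNoetherianRing R] {𝔪 : Ideal R} [h𝔪 : 𝔪.IsMaximal]
    (hd : ∀ i, dF i ∘ₗ dF (i + 1) = 0) (hnull : ∀ x ∈ 𝔪, ∃ m, NullHomotopicAt dF i (x ^ m))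
    (hsucc : ∀ (N : Type u) [AddCommGroup N] [Module R N], TensorExactAt dF (i + 1) N)
    (hres : TensorExactAt dF i (R ⧸ 𝔪)) (N : Type u) [AddCommGroup N] [Module R N] :
    TensorExactAt dF i N := by
  refine of_forall_finite hd (fun N _ _ hN ↦ ?_) N
  induction hN using IsNoetherianRing.induction_on_isQuotientEquivQuotientPrime R with
  | subsingleton N => exact of_subsingleton N hd
  | quotient N P e =>
    refine congr e.symm ?_
    by_cases hP : 𝔪 ≤ P.1
    · rwa [← h𝔪.eq_of_le P.2.ne_top hP]
    · obtain ⟨x, hx, hxP⟩ := Set.not_subset.1 hP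
      refine of_isSMulRegular hd (hnull x hx) ?_ (hsucc _)
      rw [isSMulRegular_quotient_iff_mem_of_smul_mem]
      exact fun a ha ↦ (P.2.mem_or_mem ha).resolve_left hxP
  | exact N₁ N₂ N₃ f g hf hg hfg h₁ h₃ => exact middle hd hf hfg hg h₁ h₃

end TensorExactAt

theorem exists_mem_isSMulRegular_of_notMem_associatedPrimes [IsNoetherianRing R] {𝔪 : Ideal R}
    [h𝔪 : 𝔪.IsMaximal] {N : Type*} [AddCommGroup N] [Module R N] [Module.Finite R N]
    (h : 𝔪 ∉ associatedPrimes R N) : ∃ x ∈ 𝔪, IsSMulRegular N x := by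
  by_contra! hcon
  have hsub : (𝔪 : Set R) ⊆ ⋃ P ∈ associatedPrimes R N, (P : Set R) := by
    rw [biUnion_associatedPrimes_eq_compl_regular R N]
    exact hcon
  obtain ⟨P, hP, hle⟩ := (𝔪.subset_union_prime_finite (associatedPrimes.finite R N)
    (f := id) 0 0 fun _ h _ _ ↦ h.1).1 hsub
  exact h (h𝔪.eq_of_le hP.1.ne_top hle ▸ hP)

variable [IsNoetherianRing R] [∀ i, Module.Flat R (F i)] {𝔪 : Ideal R}

theorem TensorExactAt.notMem_associatedPrimes (hd : ∀ i, dF i ∘ₗ dF (i + 1) = 0)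
    (hsucc : ∀ (N : Type u) [AddCommGroup N] [Module R N], TensorExactAt dF (i + 1) N)
    (hres : ¬ TensorExactAt dF i (R ⧸ 𝔪)) {N : Type u} [AddCommGroup N] [Module R N]
    (hN : TensorExactAt dF i N) : 𝔪 ∉ associatedPrimes R N := by
  intro hm
  obtain ⟨-, f, hf⟩ := (isAssociatedPrime_iff_exists_injective_linearMap 𝔪 N).1 hm
  exact hres (left hd hf (LinearMap.exact_map_mkQ_range f) (Submodule.mkQ_surjective _) hN
    (hsucc _))

/-- The sequence is built greedily: modulo the `q`-th powers found so far the complex is still exact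
at the spot `r`, so `R ⧸ 𝔪` does not embed in the quotient and prime avoidance applies. -/
theorem exists_isWeaklyRegular_map_pow [𝔪.IsMaximal] (hd : ∀ i, dF i ∘ₗ dF (i + 1) = 0)
    (hR : ∀ i, TensorExactAt dF i R) {r : ℕ}
    (hr : ∀ (N : Type u) [AddCommGroup N] [Module R N] (i : ℕ), r ≤ i → TensorExactAt dF i N)
    (hres : ∀ s, r = s + 1 → ¬ TensorExactAt dF s (R ⧸ 𝔪)) (q : ℕ) {t : ℕ} (ht : t ≤ r) :
    ∃ xs : List R, xs.length = t ∧ (∀ x ∈ xs, x ∈ 𝔪) ∧ IsWeaklyRegular R (xs.map (· ^ q)) := by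
  induction t with
  | zero => exact ⟨[], by simp⟩
  | succ t ih =>
    obtain ⟨xs, hlen, hxs, hreg⟩ := ih (by omega)
    obtain ⟨s, rfl⟩ : ∃ s, r = s + 1 := ⟨r - 1, by omega⟩
    have hN := TensorExactAt.quotient_ofList hd (xs.map (· ^ q)) R 0 hreg (fun i _ ↦ hR i) s
      (by simp; omega)
    obtain ⟨x, hx, hxN⟩ := exists_mem_isSMulRegular_of_notMem_associatedPrimes
      (hN.notMem_associatedPrimes hd (fun N _ _ ↦ hr N _ le_rfl) (hres s rfl))
    refine ⟨xs ++ [x], by simp [hlen], ?_, ?_⟩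
    · simpa [or_imp, forall_and] using ⟨hxs, hx⟩
    · rw [List.map_append, isWeaklyRegular_append_iff]
      exact ⟨hreg, (isWeaklyRegular_singleton_iff _ _).2 (hxN.pow q)⟩

theorem exists_isWeaklyRegular_map_pow_of_bounded [h𝔪 : 𝔪.IsMaximal]
    (hd : ∀ i, dF i ∘ₗ dF (i + 1) = 0) (hnull : ∀ x ∈ 𝔪, ∀ i, ∃ m, NullHomotopicAt dF i (x ^ m))
    {ℓ : ℕ} (hℓ : ∀ i, ℓ < i → Subsingleton (F i)) (hR : ∀ i, TensorExactAt dF i R) (q : ℕ) :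
    ∃ xs : List R, (∀ x ∈ xs, x ∈ 𝔪) ∧ IsWeaklyRegular R (xs.map (· ^ q)) ∧
      ∀ (N : Type u) [AddCommGroup N] [Module R N] (i : ℕ), xs.length ≤ i →
        TensorExactAt dF i N := by
  classical
  let P (r : ℕ) : Prop :=
    ∀ (N : Type u) [AddCommGroup N] [Module R N] (i : ℕ), r ≤ i → TensorExactAt dF i N
  have hP : ∃ r, P r := ⟨ℓ, fun N _ _ i hi ↦ by
    have := hℓ (i + 1) (by omega)
    exact .of_subsingleton N hd⟩
  have hres : ∀ s, Nat.find hP = s + 1 → ¬ TensorExactAt dF s (R ⧸ 𝔪) := by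
    refine fun s hs hk ↦ Nat.find_min hP (m := s) (by omega) fun N _ _ i hi ↦ ?_
    have hsucc := hs ▸ Nat.find_spec hP
    rcases hi.eq_or_lt with rfl | hi
    · exact .of_residueField hd (fun x hx ↦ hnull x hx s) (fun N _ _ ↦ hsucc N _ le_rfl) hk N
    · exact hsucc N i hi
  obtain ⟨xs, hlen, hxs, hreg⟩ :=
    exists_isWeaklyRegular_map_pow hd hR (Nat.find_spec hP) hres q le_rfl
  exact ⟨xs, hxs, hreg, fun N _ _ i hi ↦ Nat.find_spec hP N i (hlen ▸ hi)⟩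

/-- The `q`-th powers of a sufficiently long sequence in `𝔪` form a regular sequence in `R`, so the
sequence itself is regular on `S`, which is `R` seen through the `q`-th power map. -/
theorem TensorExactAt.of_ringEquiv_pow [𝔪.IsMaximal]
    (hd : ∀ i, dF i ∘ₗ dF (i + 1) = 0) (hnull : ∀ x ∈ 𝔪, ∀ i, ∃ m, NullHomotopicAt dF i (x ^ m))
    {ℓ : ℕ} (hℓ : ∀ i, ℓ < i → Subsingleton (F i)) (hR : ∀ i, TensorExactAt dF i R) (q : ℕ)
    {S : Type u} [CommRing S] [Algebra R S] (e : R ≃+* S)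
    (he : ∀ x, algebraMap R S x = e (x ^ q)) (i : ℕ) : TensorExactAt dF i S := by
  obtain ⟨xs, hxs, hreg, hexact⟩ := exists_isWeaklyRegular_map_pow_of_bounded hd hnull hℓ hR q
  refine of_isWeaklyRegular hd xs.length hexact xs (fun x hx ↦ hnull x (hxs x hx)) S ?_ i (by omega)
  rw [← isWeaklyRegular_map_algebraMap_iff S S xs, show xs.map (algebraMap R S) =
    (xs.map (· ^ q)).map e by simp [he],
    ← AddEquiv.isWeaklyRegular_congr (e := e.toAddEquiv) (as := xs.map (· ^ q))]
  · exact hreg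
  · rw [List.forall₂_map_right_iff]
    exact List.forall₂_same.2 fun x _ y ↦ by simp

end Acyclicity

section Resolution

variable {R M : Type*} [CommRing R] [AddCommGroup M] [Module R M] {F : ℕ → Type*}
  [∀ i, AddCommGroup (F i)] [∀ i, Module R (F i)] {dF : ∀ i, F (i + 1) →ₗ[R] F i} {ε : F 0 →ₗ[R] M}

theorem exists_comp_eq_of_range_le {P N N' : Type*} [AddCommGroup P] [Module R P]
    [Module.Projective R P] [AddCommGroup N] [Module R N] [AddCommGroup N'] [Module R N']
    (f : N →ₗ[R] N') (g : P →ₗ[R] N') (h : LinearMap.range g ≤ LinearMap.range f) :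
    ∃ s : P →ₗ[R] N, f ∘ₗ s = g := by
  obtain ⟨s, hs⟩ := Module.projective_lifting_property f.rangeRestrict
    (g.codRestrict (LinearMap.range f) fun x ↦ h ⟨x, rfl⟩) f.surjective_rangeRestrict
  exact ⟨s, LinearMap.ext fun x ↦ congrArg Subtype.val (LinearMap.congr_fun hs x)⟩

variable [∀ i, Module.Projective R (F i)]

theorem exists_comp_add_comp_eq_smul_id {i : ℕ} {a : R}
    (hex : LinearMap.range (dF (i + 1)) = LinearMap.ker (dF i)) {t : F i →ₗ[R] F (i + 1)}
    (ht : dF i ∘ₗ t ∘ₗ dF i = a • dF i) :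
    ∃ s : F (i + 1) →ₗ[R] F (i + 2), dF (i + 1) ∘ₗ s + t ∘ₗ dF i = a • LinearMap.id := by
  obtain ⟨s, hs⟩ := exists_comp_eq_of_range_le (dF (i + 1)) (a • LinearMap.id - t ∘ₗ dF i) <| by
    rw [hex, LinearMap.range_le_ker_iff, LinearMap.comp_sub, ht, LinearMap.comp_smul,
      LinearMap.comp_id, sub_self]
  exact ⟨s, by rw [hs, sub_add_cancel]⟩

theorem nullHomotopicAt_of_mem_annihilator (hex0 : LinearMap.range (dF 0) = LinearMap.ker ε)
    (hex : ∀ i, LinearMap.range (dF (i + 1)) = LinearMap.ker (dF i)) {a : R}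
    (ha : a ∈ Module.annihilator R M) (i : ℕ) : NullHomotopicAt dF i a := by
  have hdd (i : ℕ) : dF i ∘ₗ dF (i + 1) = 0 := LinearMap.range_le_ker_iff.1 (hex i).le
  suffices ∀ i, ∃ t : F i →ₗ[R] F (i + 1), dF i ∘ₗ t ∘ₗ dF i = a • dF i by
    obtain ⟨t, ht⟩ := this i
    obtain ⟨s, hs⟩ := exists_comp_add_comp_eq_smul_id (hex i) ht
    exact ⟨s, t, hs⟩
  intro i
  induction i with
  | zero =>
    obtain ⟨t, ht⟩ := exists_comp_eq_of_range_le (dF 0) (a • LinearMap.id) <| by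
      rw [hex0, LinearMap.range_le_ker_iff]
      ext x
      simpa using Module.mem_annihilator.1 ha (ε x)
    exact ⟨t, by rw [← LinearMap.comp_assoc, ht, LinearMap.smul_comp, LinearMap.id_comp]⟩
  | succ i ih =>
    obtain ⟨t, ht⟩ := ih
    obtain ⟨s, hs⟩ := exists_comp_add_comp_eq_smul_id (hex i) ht
    refine ⟨s, ?_⟩
    have := congrArg (· ∘ₗ dF (i + 1)) hs
    simpa only [LinearMap.add_comp, LinearMap.comp_assoc, hdd, LinearMap.comp_zero, add_zero,
      LinearMap.smul_comp, LinearMap.id_comp] using this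

end Resolution

/-! ### Base change of the resolution along Frobenius -/

section Coordinates

open TensorProduct

/-- The base change of `f` along the ring homomorphism `φ`, written in coordinates: `φ` is applied
to the entries of the matrix of `f`. -/
def coordBaseChange {R S M M' c c' : Type*} [CommRing R] [CommRing S] [AddCommGroup M] [Module R M]
    [AddCommGroup M'] [Module R M'] [Fintype c] [DecidableEq c] [Fintype c'] (φ : R →+* S)
    (b : Module.Basis c R M) (b' : Module.Basis c' R M') (f : M →ₗ[R] M') :
    (c → S) →ₗ[S] (c' → S) :=
  ((LinearMap.toMatrix b b' f).map φ).mulVecLin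

/-- The base change along `φ`, in coordinates, of the linear map from a free module to `R ⧸ I`
whose value on the `i`-th basis vector is the class of `E i`. -/
def coordAugmentation {R S c : Type*} [CommRing R] [CommRing S] [Fintype c] (φ : R →+* S)
    (I : Ideal R) (E : c → R) : (c → S) →ₗ[S] S ⧸ I.map φ :=
  Fintype.linearCombination S fun i ↦ Ideal.Quotient.mk (I.map φ) (φ (E i))

variable {R S : Type*} [CommRing R] [CommRing S]

section BaseChange

variable [Algebra R S]

theorem coordBaseChange_comp_basis_equivFun {M M' c c' : Type*} [AddCommGroup M] [Module R M]
    [AddCommGroup M'] [Module R M'] [Fintype c] [DecidableEq c] [Fintype c']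
    (b : Module.Basis c R M) (b' : Module.Basis c' R M') (f : M →ₗ[R] M') :
    coordBaseChange (algebraMap R S) b b' f ∘ₗ (Algebra.TensorProduct.basis S b).equivFun =
      (Algebra.TensorProduct.basis S b').equivFun ∘ₗ f.baseChange S := by
  refine LinearMap.ext fun z ↦ ?_
  rw [coordBaseChange, ← LinearMap.toMatrix_baseChange]
  exact LinearMap.toMatrix_mulVec_repr _ _ _ z

theorem exact_coordBaseChange {M M' M'' c c' c'' : Type*} [AddCommGroup M] [Module R M]
    [AddCommGroup M'] [Module R M'] [AddCommGroup M''] [Module R M'']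
    [Fintype c] [DecidableEq c] [Fintype c'] [DecidableEq c'] [Fintype c'']
    (b : Module.Basis c R M) (b' : Module.Basis c' R M') (b'' : Module.Basis c'' R M'')
    {f : M →ₗ[R] M'} {g : M' →ₗ[R] M''} (h : Function.Exact (f.lTensor S) (g.lTensor S)) :
    Function.Exact (coordBaseChange (algebraMap R S) b b' f)
      (coordBaseChange (algebraMap R S) b' b'' g) :=
  .of_ladder_linearEquiv_of_exact (coordBaseChange_comp_basis_equivFun b b' f)
    (coordBaseChange_comp_basis_equivFun b' b'' g) h

theorem coordAugmentation_comp_basis_equivFun {I : Ideal R} {M c : Type*} [AddCommGroup M]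
    [Module R M] [Fintype c] {b : Module.Basis c R M} {ε : M →ₗ[R] R ⧸ I} {E : c → R}
    (hE : ∀ i, Ideal.Quotient.mk I (E i) = ε (b i)) :
    coordAugmentation (algebraMap R S) I E ∘ₗ (Algebra.TensorProduct.basis S b).equivFun =
    (Algebra.TensorProduct.quotIdealMapEquivTensorQuot S I).symm.toLinearEquiv ∘ₗ
      ε.baseChange S := by
  classical
  refine (Algebra.TensorProduct.basis S b).ext fun i ↦ ?_
  have hsymm : (Algebra.TensorProduct.quotIdealMapEquivTensorQuot S I).symm
      (1 ⊗ₜ Ideal.Quotient.mk I (E i)) = Ideal.Quotient.mk _ (E i • (1 : S)) := rfl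
  rw [LinearMap.comp_apply, LinearMap.comp_apply, LinearEquiv.coe_coe, Module.Basis.equivFun_apply,
    Module.Basis.repr_self, Finsupp.single_eq_pi_single, coordAugmentation,
    Fintype.linearCombination_apply_single, Algebra.TensorProduct.basis_apply,
    LinearMap.baseChange_tmul, ← hE, one_smul]
  exact (hsymm.trans (by rw [Algebra.smul_def, mul_one])).symm

end BaseChange

variable {I : Ideal R} {M c : Type*} [AddCommGroup M] [Module R M] [Fintype c]
  {b : Module.Basis c R M} {ε : M →ₗ[R] R ⧸ I} {E : c → R}

theorem exact_coordBaseChange_coordAugmentation {M' c' : Type*} [AddCommGroup M'] [Module R M']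
    [Fintype c'] [DecidableEq c'] (φ : R →+* S) (b' : Module.Basis c' R M')
    {f : M' →ₗ[R] M} (hfε : Function.Exact f ε) (hε : Function.Surjective ε)
    (hE : ∀ i, Ideal.Quotient.mk I (E i) = ε (b i)) :
    Function.Exact (coordBaseChange φ b' b f) (coordAugmentation φ I E) :=
  let := φ.toAlgebra
  .of_ladder_linearEquiv_of_exact (coordBaseChange_comp_basis_equivFun b' b f)
    (coordAugmentation_comp_basis_equivFun hE) (lTensor_exact S hfε hε)

theorem coordAugmentation_surjective (φ : R →+* S) (hε : Function.Surjective ε)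
    (hE : ∀ i, Ideal.Quotient.mk I (E i) = ε (b i)) :
    Function.Surjective (coordAugmentation φ I E) := by
  let := φ.toAlgebra
  change Function.Surjective (coordAugmentation (algebraMap R S) I E)
  refine .of_comp (g := (Algebra.TensorProduct.basis S b).equivFun) ?_
  rw [← LinearEquiv.coe_toLinearMap, ← LinearMap.coe_comp,
    coordAugmentation_comp_basis_equivFun hE, LinearMap.coe_comp]
  exact (LinearEquiv.surjective _).comp (ε.lTensor_surjective S hε)

end Coordinates

section FrobeniusBaseChange

universe u

variable {R : Type u} [CommRing R] [IsNoetherianRing R] {𝔪 I : Ideal R} [𝔪.IsMaximal]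
  {F : ℕ → Type*} [∀ i, AddCommGroup (F i)] [∀ i, Module R (F i)] [∀ i, Module.Projective R (F i)]
  {dF : ∀ i, F (i + 1) →ₗ[R] F i} {ε : F 0 →ₗ[R] R ⧸ I} {c : ℕ → Type*} [∀ i, Fintype (c i)]
  [∀ i, DecidableEq (c i)]

theorem exact_coordBaseChange_of_ringEquiv_pow (h𝔪 : 𝔪 ≤ I.radical)
    (hex0 : LinearMap.range (dF 0) = LinearMap.ker ε)
    (hex : ∀ i, LinearMap.range (dF (i + 1)) = LinearMap.ker (dF i))
    {ℓ : ℕ} (hℓ : ∀ i, ℓ < i → Subsingleton (F i)) (bas : ∀ i, Module.Basis (c i) R (F i))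
    {S : Type u} [CommRing S] (φ : R →+* S) (e : R ≃+* S) (q : ℕ) (hφ : ∀ x, φ x = e (x ^ q))
    (i : ℕ) :
    Function.Exact (coordBaseChange φ (bas (i + 2)) (bas (i + 1)) (dF (i + 1)))
      (coordBaseChange φ (bas (i + 1)) (bas i) (dF i)) := by
  let := φ.toAlgebra
  refine exact_coordBaseChange _ _ _ (TensorExactAt.of_ringEquiv_pow (𝔪 := 𝔪)
    (fun i ↦ LinearMap.range_le_ker_iff.1 (hex i).le) (fun x hx i ↦ ?_) hℓ
    (fun i ↦ .of_exact_self (LinearMap.exact_iff.2 (hex i).symm)) q e hφ i)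
  obtain ⟨m, hm⟩ := h𝔪 hx
  exact ⟨m, nullHomotopicAt_of_mem_annihilator hex0 hex (by rwa [Ideal.annihilator_quotient]) i⟩

variable (p : ℕ) [ExpChar R p] (n : ℕ)

theorem exact_coordBaseChange_iterateFrobenius (h𝔪 : 𝔪 ≤ I.radical)
    (hex0 : LinearMap.range (dF 0) = LinearMap.ker ε)
    (hex : ∀ i, LinearMap.range (dF (i + 1)) = LinearMap.ker (dF i))
    {ℓ : ℕ} (hℓ : ∀ i, ℓ < i → Subsingleton (F i)) (bas : ∀ i, Module.Basis (c i) R (F i)) (i : ℕ) :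
    Function.Exact
      (coordBaseChange (iterateFrobenius R p n) (bas (i + 2)) (bas (i + 1)) (dF (i + 1)))
      (coordBaseChange (iterateFrobenius R p n) (bas (i + 1)) (bas i) (dF i)) :=
  exact_coordBaseChange_of_ringEquiv_pow h𝔪 hex0 hex hℓ bas _ (.refl R) (p ^ n)
    (fun _ ↦ iterateFrobenius_def ..) i

end FrobeniusBaseChange

/-! ### Graded modules and Euler characteristics -/

section HomogeneousComponent

open DirectSum

variable {ι k M N : Type*} [DecidableEq ι] [CommRing k] [AddCommGroup M] [Module k M]
  [AddCommGroup N] [Module k N] {ℳ : ι → Submodule k M} [Decomposition ℳ]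
  {𝒩 : ι → Submodule k N} [Decomposition 𝒩]

variable (ℳ) in
/-- The projection of a graded module onto its component of degree `j`, as an endomorphism. -/
def homogeneousComponent (j : ι) : M →ₗ[k] M :=
  (ℳ j).subtype ∘ₗ component k ι _ j ∘ₗ (decomposeLinearEquiv ℳ).toLinearMap

variable (ℳ) in
theorem homogeneousComponent_mem (j : ι) (x : M) : homogeneousComponent ℳ j x ∈ ℳ j :=
  (decompose ℳ x j).2

theorem homogeneousComponent_of_mem {j : ι} {x : M} (hx : x ∈ ℳ j) :
    homogeneousComponent ℳ j x = x :=
  decompose_of_mem_same ℳ hx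

theorem homogeneousComponent_of_mem_ne {i j : ι} {x : M} (hx : x ∈ ℳ i) (hij : i ≠ j) :
    homogeneousComponent ℳ j x = 0 :=
  decompose_of_mem_ne ℳ hx hij

variable (ℳ) in
theorem finite_setOf_homogeneousComponent_ne_zero (x : M) :
    {j | homogeneousComponent ℳ j x ≠ 0}.Finite := by
  classical
  exact (decompose ℳ x).support.finite_toSet.subset fun j hj ↦
    DFinsupp.mem_support_iff.2 fun h ↦ hj (congrArg Subtype.val h)

theorem homogeneousComponent_map [AddCommGroup ι] (f : M →ₗ[k] N) {a : ι}
    (hf : ∀ t, ∀ x ∈ ℳ t, f x ∈ 𝒩 (a + t)) (j : ι) (x : M) :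
    homogeneousComponent 𝒩 j (f x) = f (homogeneousComponent ℳ (j - a) x) := by
  induction x using Decomposition.inductionOn ℳ with
  | zero => simp only [map_zero]
  | add x y hx hy => simp only [map_add, hx, hy]
  | @homogeneous i x =>
    by_cases h : i = j - a
    · subst h
      rw [homogeneousComponent_of_mem x.2, homogeneousComponent_of_mem]
      simpa only [add_sub_cancel] using hf _ x x.2
    · rw [homogeneousComponent_of_mem_ne x.2 h,
        homogeneousComponent_of_mem_ne (hf _ x x.2) fun h' ↦ h (eq_sub_of_add_eq' h'), map_zero]

theorem homogeneousComponent_map_of_degree_zero [AddCommGroup ι] (f : M →ₗ[k] N)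
    (hf : ∀ t, ∀ x ∈ ℳ t, f x ∈ 𝒩 t) (j : ι) (x : M) :
    homogeneousComponent 𝒩 j (f x) = f (homogeneousComponent ℳ j x) := by
  rw [homogeneousComponent_map f (a := 0) (by simpa only [zero_add] using hf), sub_zero]

end HomogeneousComponent

section QuotientComponent

open DirectSum

variable {ι k R F : Type*} [DecidableEq ι] [CommRing k] [CommRing R] [Algebra k R]
  [AddCommGroup F] [Module R F] [Module k F] [IsScalarTower k R F] {ℱ : ι → Submodule k F}
  [Decomposition ℱ] {N : Submodule R F} (hN : N.IsHomogeneous ℱ)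

/-- The projection of the quotient of a graded module by a homogeneous submodule onto its component
of degree `j`. -/
def quotientComponent (j : ι) : F ⧸ N →ₗ[k] F ⧸ N :=
  (N.restrictScalars k).liftQ (N.mkQ.restrictScalars k ∘ₗ homogeneousComponent ℱ j)
    (fun _ hx ↦ (Submodule.Quotient.mk_eq_zero N).2 (hN j hx)) ∘ₗ
  (Submodule.Quotient.restrictScalarsEquiv k N).symm.toLinearMap

theorem quotientComponent_mk (j : ι) (x : F) :
    quotientComponent hN j (N.mkQ x) = N.mkQ (homogeneousComponent ℱ j x) :=
  rfl

theorem isProj_quotientComponent (j : ι) :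
    LinearMap.IsProj ((ℱ j).map (N.mkQ.restrictScalars k)) (quotientComponent hN j) where
  map_mem z := by
    obtain ⟨x, rfl⟩ := N.mkQ_surjective z
    exact ⟨_, homogeneousComponent_mem ℱ j x, rfl⟩
  map_id := by
    rintro _ ⟨x, hx, rfl⟩
    exact congrArg N.mkQ (homogeneousComponent_of_mem hx)

end QuotientComponent

section GradedModule

open DirectSum

variable {ι k R F : Type*} [DecidableEq ι] [AddCommGroup ι] [CommRing k] [CommRing R] [Algebra k R]
  {𝒜 : ι → Submodule k R} [GradedAlgebra 𝒜] [AddCommGroup F] [Module R F] [Module k F]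
  [IsScalarTower k R F] {ℱ : ι → Submodule k F} [Decomposition ℱ] [SetLike.GradedSMul 𝒜 ℱ]

theorem homogeneousComponent_smul_of_mem_right {b : ι} {x : F} (hx : x ∈ ℱ b) (j : ι) (r : R) :
    homogeneousComponent ℱ j (r • x) = homogeneousComponent 𝒜 (j - b) r • x :=
  homogeneousComponent_map ((LinearMap.toSpanSingleton R F x).restrictScalars k)
    (fun t _ hr ↦ add_comm t b ▸ SetLike.GradedSMul.smul_mem hr hx) j r

theorem isHomogeneous_smul_top {J : Ideal R} (hJ : J.IsHomogeneous 𝒜) :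
    (J • ⊤ : Submodule R F).IsHomogeneous ℱ := by
  intro j x hx
  change homogeneousComponent ℱ j x ∈ _
  refine Submodule.smul_induction_on hx (fun r hr y hy ↦ ?_) fun x y hx hy ↦ ?_
  · clear hy
    induction y using Decomposition.inductionOn ℱ with
    | zero => simp only [smul_zero, map_zero, Submodule.zero_mem]
    | add x y hx hy => simpa only [smul_add, map_add] using Submodule.add_mem _ hx hy
    | homogeneous y =>
      rw [homogeneousComponent_smul_of_mem_right (𝒜 := 𝒜) y.2]
      exact Submodule.smul_mem_smul (hJ _ hr) trivial
  · simpa only [map_add] using Submodule.add_mem _ hx hy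

theorem quotientComponent_inducedQuot {F' : Type*} [AddCommGroup F'] [Module R F'] [Module k F']
    [IsScalarTower k R F'] {ℱ' : ι → Submodule k F'} [Decomposition ℱ'] [SetLike.GradedSMul 𝒜 ℱ']
    {J : Ideal R} (hJ : J.IsHomogeneous 𝒜) (f : F →ₗ[R] F') (hf : ∀ t, ∀ x ∈ ℱ t, f x ∈ ℱ' t)
    (j : ι) :
    (inducedQuot J f).restrictScalars k ∘ₗ
        quotientComponent (isHomogeneous_smul_top (ℱ := ℱ) hJ) j =
      quotientComponent (isHomogeneous_smul_top (ℱ := ℱ') hJ) j ∘ₗ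
        (inducedQuot J f).restrictScalars k := by
  refine LinearMap.ext fun z ↦ ?_
  obtain ⟨x, rfl⟩ := Submodule.mkQ_surjective _ z
  exact congrArg (Submodule.mkQ _)
    (homogeneousComponent_map_of_degree_zero (f.restrictScalars k) hf j x).symm

end GradedModule

section GradedPieces

variable {k : Type*} [Field k] {E E' : Type*} [AddCommGroup E] [Module k E] [AddCommGroup E']
  [Module k E']

theorem finrank_map_add_finrank_inf_ker (V : Submodule k E) [Module.Finite k V] (f : E →ₗ[k] E') :
    Module.finrank k (V.map f) + Module.finrank k (V ⊓ LinearMap.ker f : Submodule k E) =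
      Module.finrank k V := by
  rw [← LinearMap.finrank_range_add_finrank_ker (f.domRestrict V), LinearMap.range_domRestrict,
    LinearMap.ker_domRestrict, ← Submodule.map_comap_subtype,
    (Submodule.equivMapOfInjective V.subtype V.injective_subtype _).finrank_eq]

theorem map_eq_inf_range_of_isProj {V : Submodule k E} {V' : Submodule k E'} {P : E →ₗ[k] E}
    {P' : E' →ₗ[k] E'} (hP : LinearMap.IsProj V P) (hP' : LinearMap.IsProj V' P') {f : E →ₗ[k] E'}
    (hf : f ∘ₗ P = P' ∘ₗ f) : V.map f = V' ⊓ LinearMap.range f := by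
  rw [← hP.range, ← LinearMap.range_comp, hf]
  ext x
  constructor
  · rintro ⟨y, rfl⟩
    refine ⟨hP'.map_mem _, P y, LinearMap.congr_fun hf y⟩
  · rintro ⟨hx, y, rfl⟩
    exact ⟨y, hP'.map_id _ hx⟩

end GradedPieces

section EulerCharacteristic

variable {k : Type*} [Field k] {E : ℕ → Type*} [∀ i, AddCommGroup (E i)] [∀ i, Module k (E i)]
  {D : ∀ i, E (i + 1) →ₗ[k] E i} {V : ∀ i, Submodule k (E i)} [∀ i, Module.Finite k (V i)]

theorem sum_neg_one_pow_finrank_eq_sum_homology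
    (hmap : ∀ i, (V (i + 1)).map (D i) = V i ⊓ LinearMap.range (D i)) {ℓ : ℕ}
    (hℓ : V (ℓ + 1) = ⊥) :
    ∑ i ∈ Finset.range (ℓ + 1), (-1 : ℤ) ^ i * Module.finrank k (V i) =
      Module.finrank k (V 0) -
          Module.finrank k (V 0 ⊓ LinearMap.range (D 0) : Submodule k (E 0)) +
        ∑ i ∈ Finset.range ℓ, (-1 : ℤ) ^ (i + 1) *
          (Module.finrank k (V (i + 1) ⊓ LinearMap.ker (D i) : Submodule k (E (i + 1))) -
            Module.finrank k
              (V (i + 1) ⊓ LinearMap.range (D (i + 1)) : Submodule k (E (i + 1)))) := by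
  suffices h : ∀ n : ℕ, ∑ i ∈ Finset.range (n + 1), (-1 : ℤ) ^ i * Module.finrank k (V i) =
      Module.finrank k (V 0) -
          Module.finrank k (V 0 ⊓ LinearMap.range (D 0) : Submodule k (E 0)) +
        ∑ i ∈ Finset.range n, (-1 : ℤ) ^ (i + 1) *
          (Module.finrank k (V (i + 1) ⊓ LinearMap.ker (D i) : Submodule k (E (i + 1))) -
            Module.finrank k
              (V (i + 1) ⊓ LinearMap.range (D (i + 1)) : Submodule k (E (i + 1)))) +
        (-1) ^ n * Module.finrank k (V n ⊓ LinearMap.range (D n) : Submodule k (E n)) by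
    rw [h, ← hmap ℓ, hℓ, Submodule.map_bot, finrank_bot, Nat.cast_zero, mul_zero, add_zero]
  intro n
  induction n with
  | zero => simp
  | succ n ih =>
    rw [Finset.sum_range_succ, ih, Finset.sum_range_succ _ n, ← hmap n,
      ← finrank_map_add_finrank_inf_ker (V (n + 1)) (D n), pow_succ, Nat.cast_add]
    ring

theorem finrank_map_eq_sum_neg_one_pow_finrank {W : Type*} [AddCommGroup W] [Module k W]
    {f : E 0 →ₗ[k] W} (hf : Function.Exact (D 0) f)
    (hD : ∀ i, Function.Exact (D (i + 1)) (D i))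
    (hmap : ∀ i, (V (i + 1)).map (D i) = V i ⊓ LinearMap.range (D i)) {ℓ : ℕ}
    (hℓ : V (ℓ + 1) = ⊥) :
    (Module.finrank k ((V 0).map f) : ℤ) =
      ∑ i ∈ Finset.range (ℓ + 1), (-1 : ℤ) ^ i * Module.finrank k (V i) := by
  rw [sum_neg_one_pow_finrank_eq_sum_homology hmap hℓ, Finset.sum_eq_zero fun i _ ↦ by
    rw [(hD i).linearMap_ker_eq, sub_self, mul_zero], add_zero, ← hf.linearMap_ker_eq,
    ← finrank_map_add_finrank_inf_ker (V 0) f, Nat.cast_add, add_sub_cancel_right]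

end EulerCharacteristic

section IrrelevantIdeal

open DirectSum

variable {ι k R : Type*} [Field k] [CommRing R] [Algebra k R]

/-- The irrelevant ideal of a graded ring, generated by the homogeneous elements of nonzero
degree. -/
abbrev irrelevantIdeal [Zero ι] (𝒜 : ι → Submodule k R) : Ideal R :=
  Ideal.span {x | ∃ t, t ≠ 0 ∧ x ∈ 𝒜 t}

/-- The ideal generated by the homogeneous elements of degree greater than `j`. -/
def idealGT [LT ι] (𝒜 : ι → Submodule k R) (j : ι) : Ideal R :=
  Ideal.span {x | ∃ t, j < t ∧ x ∈ 𝒜 t}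

theorem irrelevantIdeal_isHomogeneous [DecidableEq ι] [AddMonoid ι] (𝒜 : ι → Submodule k R)
    [GradedAlgebra 𝒜] : (irrelevantIdeal 𝒜).IsHomogeneous 𝒜 :=
  Ideal.homogeneous_span 𝒜 _ fun _ ⟨t, _, hx⟩ ↦ ⟨t, hx⟩

theorem sub_homogeneousComponent_zero_mem_irrelevantIdeal [DecidableEq ι] [AddMonoid ι]
    (𝒜 : ι → Submodule k R) [GradedAlgebra 𝒜] (x : R) :
    x - homogeneousComponent 𝒜 0 x ∈ irrelevantIdeal 𝒜 := by
  induction x using Decomposition.inductionOn 𝒜 with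
  | zero => simp only [map_zero, sub_zero, Submodule.zero_mem]
  | add x y hx hy => simpa only [map_add, add_sub_add_comm] using Ideal.add_mem _ hx hy
  | @homogeneous t x =>
    by_cases ht : t = 0
    · subst ht
      rw [homogeneousComponent_of_mem x.2, sub_self]
      exact Submodule.zero_mem _
    · rw [homogeneousComponent_of_mem_ne x.2 ht, sub_zero]
      exact Ideal.subset_span ⟨t, ht, x.2⟩

theorem exists_sub_algebraMap_mem_irrelevantIdeal [DecidableEq ι] [AddMonoid ι]
    {𝒜 : ι → Submodule k R} [GradedAlgebra 𝒜] (hzero : ∀ x ∈ 𝒜 0, ∃ c : k, algebraMap k R c = x)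
    (x : R) : ∃ c : k, x - algebraMap k R c ∈ irrelevantIdeal 𝒜 := by
  obtain ⟨c, hc⟩ := hzero _ (homogeneousComponent_mem 𝒜 0 x)
  exact ⟨c, hc ▸ sub_homogeneousComponent_zero_mem_irrelevantIdeal 𝒜 x⟩

theorem idealGT_zero_eq_irrelevantIdeal [Zero ι] [LinearOrder ι] {𝒜 : ι → Submodule k R}
    (hneg : ∀ t < 0, 𝒜 t = ⊥) : idealGT 𝒜 0 = irrelevantIdeal 𝒜 := by
  refine le_antisymm (Ideal.span_mono fun x ⟨t, ht, hx⟩ ↦ ⟨t, ht.ne', hx⟩)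
    (Ideal.span_le.2 fun x ⟨t, ht, hx⟩ ↦ ?_)
  rcases ht.lt_or_gt with ht | ht
  · have hx0 : x = 0 := by simpa only [hneg t ht, Submodule.mem_bot] using hx
    exact hx0 ▸ Submodule.zero_mem _
  · exact Ideal.subset_span ⟨t, ht, hx⟩

variable [AddCommGroup ι] [LinearOrder ι] [IsOrderedAddMonoid ι]
  {𝒜 : ι → Submodule k R} [GradedAlgebra 𝒜] (hneg : ∀ t < 0, 𝒜 t = ⊥)
include hneg

theorem homogeneousComponent_eq_zero_of_mem_idealGT {i j : ι} (hij : i ≤ j) {x : R}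
    (hx : x ∈ idealGT 𝒜 j) : homogeneousComponent 𝒜 i x = 0 := by
  induction hx using Submodule.closure_induction with
  | zero => exact map_zero _
  | add x y _ _ hx hy => rw [map_add, hx, hy, add_zero]
  | smul_mem r x hx =>
    obtain ⟨t, ht, hx⟩ := hx
    have hr : homogeneousComponent 𝒜 (i - t) r = 0 := by
      simpa only [hneg _ (sub_neg.2 (hij.trans_lt ht)), Submodule.mem_bot] using
        homogeneousComponent_mem 𝒜 (i - t) r
    rw [homogeneousComponent_smul_of_mem_right (𝒜 := 𝒜) hx, hr, zero_smul]

theorem irrelevantIdeal_isMaximal [Nontrivial R]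
    (hzero : ∀ x ∈ 𝒜 0, ∃ c : k, algebraMap k R c = x) : (irrelevantIdeal 𝒜).IsMaximal := by
  have hone : (1 : R) ∉ irrelevantIdeal 𝒜 := fun h ↦ one_ne_zero <|
    (homogeneousComponent_of_mem SetLike.GradedOne.one_mem).symm.trans <|
      homogeneousComponent_eq_zero_of_mem_idealGT hneg le_rfl <|
        (idealGT_zero_eq_irrelevantIdeal hneg).symm ▸ h
  have : Nontrivial (R ⧸ irrelevantIdeal 𝒜) :=
    Ideal.Quotient.nontrivial_iff.2 ((Ideal.ne_top_iff_one _).2 hone)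
  have hsurj : Function.Surjective (algebraMap k (R ⧸ irrelevantIdeal 𝒜)) := fun z ↦ by
    obtain ⟨x, rfl⟩ := Ideal.Quotient.mk_surjective z
    obtain ⟨c, hc⟩ := exists_sub_algebraMap_mem_irrelevantIdeal hzero x
    exact ⟨c, (Ideal.Quotient.eq.2 hc).symm⟩
  exact Ideal.Quotient.maximal_of_isField _ <|
    ((RingEquiv.ofBijective _ ⟨RingHom.injective _, hsurj⟩).symm.toMulEquiv.isField
      (Field.toIsField k))

end IrrelevantIdeal

section Finiteness

variable {k R : Type*} [Field k] [CommRing R] [Algebra k R]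

theorem finite_quotient_of_le_radical [Algebra.FiniteType k R] {𝔪 J : Ideal R} [h𝔪 : 𝔪.IsMaximal]
    (hJ : 𝔪 ≤ J.radical) : Module.Finite k (R ⧸ J) := by
  rw [Module.finite_iff_krullDimLE_zero,
    Ideal.krullDimLE_zero_quotient_iff_forall_minimalPrimes_isMaximal]
  intro P hP
  have hle : 𝔪 ≤ P := hJ.trans (hP.1.1.radical_le_iff.2 hP.1.2)
  rwa [← h𝔪.eq_of_le hP.1.1.ne_top hle]

theorem finite_quotient_of_isFiniteLength [Algebra.FiniteType k R] {I : Ideal R}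
    (hI : IsFiniteLength R (R ⧸ I)) : Module.Finite k (R ⧸ I) := by
  have := (isFiniteLength_iff_isNoetherian_isArtinian.1 hI).2
  have : IsArtinianRing (R ⧸ I) := isArtinian_of_tower R ‹_›
  rw [Module.finite_iff_krullDimLE_zero]
  infer_instance

theorem finite_setOf_ne_zero_of_pointwise {ι M : Type*} [AddCommGroup M] [Module k M]
    [Module.Finite k M] {f : ι → M →ₗ[k] M} (hf : ∀ x, {j | f j x ≠ 0}.Finite) :
    {j | f j ≠ 0}.Finite := by
  obtain ⟨s, hs⟩ := Module.Finite.fg_top (R := k) (M := M)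
  refine (s.finite_toSet.biUnion fun x _ ↦ hf x).subset fun j hj ↦ ?_
  by_contra hj'
  simp only [Set.mem_iUnion, Set.mem_ofPred_eq, not_exists, not_not] at hj'
  exact hj (LinearMap.ext_on hs fun x hx ↦ hj' x hx)

theorem finite_setOf_map_mkQ_ne_bot {ι F : Type*} [DecidableEq ι] [AddCommGroup F] [Module R F]
    [Module k F] [IsScalarTower k R F] {ℱ : ι → Submodule k F} [DirectSum.Decomposition ℱ]
    {N : Submodule R F} (hN : N.IsHomogeneous ℱ) [Module.Finite k (F ⧸ N)] :
    {j | (ℱ j).map (N.mkQ.restrictScalars k) ≠ ⊥}.Finite := by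
  refine (finite_setOf_ne_zero_of_pointwise (f := quotientComponent hN) fun z ↦ ?_).subset
    fun j hj h ↦ hj ?_
  · obtain ⟨x, rfl⟩ := N.mkQ_surjective z
    refine (finite_setOf_homogeneousComponent_ne_zero ℱ x).subset fun j hj h ↦ hj ?_
    rw [quotientComponent_mk, h, map_zero]
  · rw [← (isProj_quotientComponent hN j).range, h, LinearMap.range_zero]

theorem isHomogeneous_map {ι : Type*} [DecidableEq ι] [AddMonoid ι] {𝒜 : ι → Submodule k R}
    [GradedAlgebra 𝒜] {I : Ideal R} (hI : I.IsHomogeneous 𝒜) {φ : R →+* R}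
    (hφ : ∀ x, SetLike.IsHomogeneousElem 𝒜 x → SetLike.IsHomogeneousElem 𝒜 (φ x)) :
    (I.map φ).IsHomogeneous 𝒜 := by
  obtain ⟨S, rfl⟩ := (Ideal.IsHomogeneous.iff_exists 𝒜 I).1 hI
  rw [Ideal.map_span, Set.image_image]
  refine Ideal.homogeneous_span 𝒜 _ ?_
  rintro _ ⟨x, -, rfl⟩
  exact hφ _ x.2

end Finiteness

section IntegerGrading

variable {k R : Type*} [Field k] [CommRing R] [Algebra k R] {𝒜 : ℤ → Submodule k R}
  [GradedAlgebra 𝒜]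

theorem pow_mem_graded {t : ℤ} {x : R} (hx : x ∈ 𝒜 t) (m : ℕ) : x ^ m ∈ 𝒜 (m * t) :=
  nsmul_eq_mul m t ▸ SetLike.pow_mem_graded m hx

theorem irrelevantIdeal_le_radical {I : Ideal R} (hI : I.IsHomogeneous 𝒜)
    [Module.Finite k (R ⧸ I)] : irrelevantIdeal 𝒜 ≤ I.radical := by
  refine Ideal.span_le.2 fun x ⟨t, ht, hx⟩ ↦ ?_
  have hinj : Function.Injective fun m : ℕ ↦ (m * t : ℤ) :=
    (mul_left_injective₀ ht).comp Nat.cast_injective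
  obtain ⟨m, hm⟩ := ((finite_setOf_map_mkQ_ne_bot hI).preimage hinj.injOn).exists_notMem
  refine ⟨m, (Submodule.Quotient.mk_eq_zero I).1 ?_⟩
  rw [← Submodule.mem_bot k, ← not_ne_iff.1 hm]
  exact ⟨_, pow_mem_graded hx m, rfl⟩

theorem irrelevantIdeal_le_radical_idealGT (hneg : ∀ t < 0, 𝒜 t = ⊥) (j : ℤ) :
    irrelevantIdeal 𝒜 ≤ (idealGT 𝒜 j).radical := by
  rw [← idealGT_zero_eq_irrelevantIdeal hneg]
  refine Ideal.span_le.2 fun x ⟨t, ht, hx⟩ ↦ ⟨j.toNat + 1, Ideal.subset_span ⟨_, ?_,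
    pow_mem_graded hx _⟩⟩
  have := j.self_le_toNat
  push_cast
  nlinarith

theorem finite_graded [Nontrivial R] [Algebra.FiniteType k R] (hneg : ∀ t < 0, 𝒜 t = ⊥)
    (hzero : ∀ x ∈ 𝒜 0, ∃ c : k, algebraMap k R c = x) (j : ℤ) : Module.Finite k (𝒜 j) := by
  have := irrelevantIdeal_isMaximal hneg hzero
  have := finite_quotient_of_le_radical (k := k) (irrelevantIdeal_le_radical_idealGT hneg j)
  refine .of_injective
    ((Ideal.Quotient.mkₐ k (idealGT 𝒜 j)).toLinearMap ∘ₗ (𝒜 j).subtype) ?_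
  refine LinearMap.ker_eq_bot.1 (LinearMap.ker_eq_bot'.2 fun x hx ↦ Subtype.ext ?_)
  rw [← homogeneousComponent_of_mem x.2]
  exact homogeneousComponent_eq_zero_of_mem_idealGT hneg le_rfl
    (Ideal.Quotient.eq_zero_iff_mem.1 hx)

end IntegerGrading

section ResidueBasis

variable {k R F c : Type*} [Field k] [CommRing R] [Algebra k R] [AddCommGroup F] [Module R F]
  [Module k F] [IsScalarTower k R F] (bas : Module.Basis c R F) {J : Ideal R}

theorem repr_mem_of_mem_smul_top {x : F} (hx : x ∈ (J • ⊤ : Submodule R F)) (i : c) :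
    bas.repr x i ∈ J := by
  refine Submodule.smul_induction_on hx (fun r hr y _ ↦ ?_) fun x y hx hy ↦ ?_
  · rw [map_smul, Finsupp.smul_apply, smul_eq_mul]
    exact J.mul_mem_right _ hr
  · rw [map_add, Finsupp.add_apply]
    exact J.add_mem hx hy

theorem linearIndependent_mkQ_basis (hJ : J ≠ ⊤) :
    LinearIndependent k fun i ↦ (J • ⊤ : Submodule R F).mkQ (bas i) := by
  rw [linearIndependent_iff']
  intro s g hg i hi
  by_contra hgi
  refine hJ (J.eq_top_of_isUnit_mem ?_ ((isUnit_iff_ne_zero.2 hgi).map (algebraMap k R)))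
  have hmem : ∑ i ∈ s, algebraMap k R (g i) • bas i ∈ (J • ⊤ : Submodule R F) := by
    rw [← Submodule.Quotient.mk_eq_zero, ← Submodule.mkQ_apply, map_sum, ← hg]
    exact Finset.sum_congr rfl fun i _ ↦ by rw [algebraMap_smul, LinearMap.map_smul_of_tower]
  classical
  simpa only [map_sum, map_smul, Module.Basis.repr_self, Finsupp.smul_single, smul_eq_mul, mul_one,
    Finsupp.finsetSum_apply, Finsupp.single_apply, Finset.sum_ite_eq', hi, if_true] using
    repr_mem_of_mem_smul_top bas hmem i

theorem span_range_mkQ_basis (hJ : ∀ r : R, ∃ a : k, r - algebraMap k R a ∈ J) :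
    Submodule.span k (Set.range fun i ↦ (J • ⊤ : Submodule R F).mkQ (bas i)) = ⊤ := by
  rw [eq_top_iff]
  rintro z -
  obtain ⟨x, rfl⟩ := Submodule.mkQ_surjective _ z
  induction bas.mem_span x using Submodule.span_induction with
  | mem x hx =>
    obtain ⟨i, rfl⟩ := hx
    exact Submodule.subset_span ⟨i, rfl⟩
  | zero => simp only [map_zero, Submodule.zero_mem]
  | add x y _ _ hx hy => simpa only [map_add] using Submodule.add_mem _ hx hy
  | smul r x _ hx =>
    obtain ⟨a, ha⟩ := hJ r
    have hmk : (J • ⊤ : Submodule R F).mkQ (r • x) = a • (J • ⊤ : Submodule R F).mkQ x := by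
      rw [← LinearMap.map_smul_of_tower, ← algebraMap_smul R a x, ← sub_eq_zero, ← map_sub,
        ← sub_smul]
      exact (Submodule.Quotient.mk_eq_zero _).2 (Submodule.smul_mem_smul ha trivial)
    exact hmk ▸ Submodule.smul_mem _ a hx

/-- The basis of `F ⧸ J F` over `k` induced by a basis of `F` over `R`, when `J` is a proper ideal
of `R` with residue field `k`. -/
def residueBasis (hJtop : J ≠ ⊤) (hJ : ∀ r : R, ∃ a : k, r - algebraMap k R a ∈ J) :
    Module.Basis c k (F ⧸ (J • ⊤ : Submodule R F)) :=
  .mk (linearIndependent_mkQ_basis bas hJtop) (span_range_mkQ_basis bas hJ).ge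

theorem residueBasis_apply (hJtop : J ≠ ⊤) (hJ : ∀ r : R, ∃ a : k, r - algebraMap k R a ∈ J)
    (i : c) : residueBasis bas hJtop hJ i = (J • ⊤ : Submodule R F).mkQ (bas i) :=
  Module.Basis.mk_apply _ _ i

end ResidueBasis

section HomogeneousGenerators

open DirectSum

variable {ι k R F : Type*} [DecidableEq ι] [AddCommGroup ι] [Field k] [CommRing R] [Algebra k R]
  {𝒜 : ι → Submodule k R} [GradedAlgebra 𝒜] [AddCommGroup F] [Module R F] [Module k F]
  [IsScalarTower k R F] {ℱ : ι → Submodule k F} [Decomposition ℱ] [SetLike.GradedSMul 𝒜 ℱ]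

variable (𝒜) in
include 𝒜 in
theorem isHomogeneous_span {s : Set F} (hs : ∀ x ∈ s, ∃ j, x ∈ ℱ j) :
    (Submodule.span R s).IsHomogeneous ℱ := by
  intro j x hx
  change homogeneousComponent ℱ j x ∈ _
  induction hx using Submodule.closure_induction with
  | zero => simp only [map_zero, Submodule.zero_mem]
  | add x y _ _ hx hy => simpa only [map_add] using Submodule.add_mem _ hx hy
  | smul_mem r x hx =>
    obtain ⟨i, hi⟩ := hs x hx
    rw [homogeneousComponent_smul_of_mem_right (𝒜 := 𝒜) hi]
    exact Submodule.smul_mem _ _ (Submodule.subset_span hx)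

theorem map_mkQ_eq_span_residueBasis {J : Ideal R} (hJ : J.IsHomogeneous 𝒜) (hJtop : J ≠ ⊤)
    (hJres : ∀ r : R, ∃ a : k, r - algebraMap k R a ∈ J) {c : Type*} {deg : c → ι}
    {bas : Module.Basis c R F} (hbas : ∀ i, bas i ∈ ℱ (deg i)) (j : ι) :
    (ℱ j).map ((J • ⊤ : Submodule R F).mkQ.restrictScalars k) =
      Submodule.span k (residueBasis bas hJtop hJres '' {i | deg i = j}) := by
  rw [← (isProj_quotientComponent (isHomogeneous_smul_top (ℱ := ℱ) hJ) j).range]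
  refine le_antisymm ?_ (Submodule.span_le.2 ?_)
  · rw [LinearMap.range_eq_map, ← (residueBasis bas hJtop hJres).span_eq, Submodule.map_span,
      Submodule.span_le]
    rintro _ ⟨_, ⟨i, rfl⟩, rfl⟩
    rw [residueBasis_apply, quotientComponent_mk]
    by_cases hi : deg i = j
    · rw [homogeneousComponent_of_mem (hi ▸ hbas i), ← residueBasis_apply bas hJtop hJres]
      exact Submodule.subset_span ⟨i, hi, rfl⟩
    · rw [homogeneousComponent_of_mem_ne (hbas i) hi, map_zero]
      exact Submodule.zero_mem _
  · rintro _ ⟨i, rfl, rfl⟩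
    refine ⟨(J • ⊤ : Submodule R F).mkQ (bas i), ?_⟩
    rw [quotientComponent_mk, homogeneousComponent_of_mem (hbas i), residueBasis_apply]

theorem finrank_map_mkQ_eq_card {J : Ideal R} (hJ : J.IsHomogeneous 𝒜) (hJtop : J ≠ ⊤)
    (hJres : ∀ r : R, ∃ a : k, r - algebraMap k R a ∈ J) {c : Type*} [Fintype c] {deg : c → ι}
    {bas : Module.Basis c R F} (hbas : ∀ i, bas i ∈ ℱ (deg i)) (j : ι) :
    Module.finrank k ((ℱ j).map ((J • ⊤ : Submodule R F).mkQ.restrictScalars k)) =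
      Fintype.card {i // deg i = j} := by
  have hli := (residueBasis bas hJtop hJres).linearIndependent.comp _
    (Subtype.val_injective (p := fun i ↦ deg i = j))
  rw [map_mkQ_eq_span_residueBasis hJ hJtop hJres hbas, ← finrank_span_eq_card hli, Set.range_comp,
    Subtype.range_coe_subtype]

theorem repr_mem_of_mem {c : Type*} [Finite c] {bas : Module.Basis c R F} {w : c → ι}
    (hbas : ∀ i, bas i ∈ ℱ (w i)) {j : ι} {x : F} (hx : x ∈ ℱ j) (i : c) :
    bas.repr x i ∈ 𝒜 (j - w i) := by
  cases nonempty_fintype c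
  have h : x = ∑ i, homogeneousComponent 𝒜 (j - w i) (bas.repr x i) • bas i := by
    conv_lhs => rw [← homogeneousComponent_of_mem hx, ← bas.sum_repr x]
    rw [map_sum]
    exact Finset.sum_congr rfl fun i _ ↦ homogeneousComponent_smul_of_mem_right (hbas i) j _
  rw [h, bas.repr_sum_self]
  exact homogeneousComponent_mem ..

end HomogeneousGenerators

section HomogeneousBasis

open DirectSum

variable {ι k R F : Type*} [AddCommGroup ι] [LinearOrder ι] [IsOrderedAddMonoid ι] [Field k]
  [CommRing R] [Algebra k R] {𝒜 : ι → Submodule k R} [GradedAlgebra 𝒜] [AddCommGroup F]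
  [Module R F] [Module k F] [IsScalarTower k R F] {ℱ : ι → Submodule k F} [Decomposition ℱ]
  [SetLike.GradedSMul 𝒜 ℱ]

theorem eq_top_of_le_sup_irrelevantIdeal_smul [Module.Finite R F] (hneg : ∀ t < 0, 𝒜 t = ⊥)
    {N : Submodule R F} (hN : N.IsHomogeneous ℱ)
    (hle : ⊤ ≤ N ⊔ (irrelevantIdeal 𝒜 • ⊤ : Submodule R F)) : N = ⊤ := by
  obtain ⟨s, hs, hsN⟩ := Submodule.exists_sub_one_mem_and_smul_le_of_fg_of_le_sup
    (Module.Finite.fg_top (R := R) (M := F)) le_top hle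
  have hs0 : homogeneousComponent 𝒜 0 s = 1 := by
    rw [← sub_eq_zero, ← homogeneousComponent_of_mem (ℳ := 𝒜) SetLike.GradedOne.one_mem, ← map_sub]
    exact homogeneousComponent_eq_zero_of_mem_idealGT hneg le_rfl
      ((idealGT_zero_eq_irrelevantIdeal hneg).symm ▸ hs)
  refine eq_top_iff.2 fun x _ ↦ ?_
  induction x using Decomposition.inductionOn ℱ with
  | zero => exact N.zero_mem
  | add x y hx hy => exact N.add_mem (hx trivial) (hy trivial)
  | @homogeneous j x =>
    have h : homogeneousComponent ℱ j (s • (x : F)) ∈ N :=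
      hN j (hsN (Submodule.smul_mem_pointwise_smul _ _ _ trivial))
    rwa [homogeneousComponent_smul_of_mem_right (𝒜 := 𝒜) x.2, sub_self, hs0, one_smul] at h

theorem exists_homogeneous_basis [Nontrivial R] [Module.Free R F] [Module.Finite R F]
    (hneg : ∀ t < 0, 𝒜 t = ⊥) (hzero : ∀ x ∈ 𝒜 0, ∃ c : k, algebraMap k R c = x) :
    ∃ (n : ℕ) (deg : Fin n → ι) (bas : Module.Basis (Fin n) R F), ∀ i, bas i ∈ ℱ (deg i) := by
  set π := (irrelevantIdeal 𝒜 • ⊤ : Submodule R F).mkQ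
  have rb := residueBasis (Module.Free.chooseBasis R F)
    (irrelevantIdeal_isMaximal hneg hzero).ne_top
    (exists_sub_algebraMap_mem_irrelevantIdeal hzero)
  have : Module.Finite k (F ⧸ (irrelevantIdeal 𝒜 • ⊤ : Submodule R F)) := .of_basis rb
  have hspan : Submodule.span k {z | ∃ j, ∃ x ∈ ℱ j, π x = z} = ⊤ := by
    refine eq_top_iff.2 fun z _ ↦ ?_
    obtain ⟨x, rfl⟩ := Submodule.mkQ_surjective _ z
    induction x using Decomposition.inductionOn ℱ with
    | zero => exact map_zero π ▸ Submodule.zero_mem _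
    | add x y hx hy => exact map_add π x y ▸ Submodule.add_mem _ (hx trivial) (hy trivial)
    | @homogeneous j x => exact Submodule.subset_span ⟨j, x, x.2, rfl⟩
  obtain ⟨s, hs, hsspan, hsli⟩ := exists_linearIndependent k {z | ∃ j, ∃ x ∈ ℱ j, π x = z}
  let kb : Module.Basis s k _ := .mk hsli (by rw [Subtype.range_coe, hsspan, hspan])
  have := Module.Finite.finite_basis kb
  have := Fintype.ofFinite s
  choose deg x hx hπx using fun z : s ↦ hs z.2
  have hx_span : Submodule.span R (Set.range x) = ⊤ := by
    refine eq_top_of_le_sup_irrelevantIdeal_smul hneg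
      (isHomogeneous_span 𝒜 (ℱ := ℱ) (Set.forall_mem_range.2 fun i ↦ ⟨_, hx i⟩)) ?_
    rw [sup_comm, ← Submodule.comap_map_mkQ, ← Submodule.map_le_iff_le_comap, Submodule.map_span]
    intro z _
    have hz : z ∈ Submodule.span k s := by rw [hsspan, hspan]; trivial
    refine Submodule.span_subset_span k R _ (Submodule.span_mono (fun w hw ↦ ?_) hz)
    exact ⟨_, ⟨⟨w, hw⟩, rfl⟩, hπx _⟩
  have hcard : Fintype.card s = Module.finrank R F := by
    rw [← Module.finrank_eq_card_basis kb, Module.finrank_eq_card_basis rb,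
      Module.finrank_eq_card_chooseBasisIndex]
  exact ⟨_, deg ∘ (Fintype.equivFin s).symm,
    (basisOfTopLeSpanOfCardEqFinrank x hx_span.ge hcard).reindex (Fintype.equivFin s),
    fun i ↦ by simpa using hx ((Fintype.equivFin s).symm i)⟩

end HomogeneousBasis

section Tor

variable {k R : Type*} [Field k] [CommRing R] [Algebra k R] {F : ℕ → Type}
  [∀ i, AddCommGroup (F i)] [∀ i, Module R (F i)] [∀ i, Module k (F i)]
  [∀ i, IsScalarTower k R (F i)] {ℱ : ∀ i, ℤ → Submodule k (F i)}
  {dF : ∀ i, F (i + 1) →ₗ[R] F i} {J : Ideal R}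

theorem boundariesPiece_le_cyclesPiece (hdd : ∀ i x, dF i (dF (i + 1) x) = 0) (i : ℕ) (j : ℤ) :
    boundariesPiece k F ℱ dF J i j ≤ cyclesPiece k F ℱ dF J i j := by
  cases i with
  | zero => exact inf_le_left
  | succ i =>
    refine inf_le_inf_left _ ?_
    rintro _ ⟨z, rfl⟩
    obtain ⟨x, rfl⟩ := Submodule.mkQ_surjective _ z
    change (J • ⊤ : Submodule R (F i)).mkQ (dF i (dF (i + 1) x)) = 0
    rw [hdd, map_zero]

variable {ℓ : ℕ} {j : ℤ}
  [∀ i, Module.Finite k ((ℱ i j).map ((J • ⊤ : Submodule R (F i)).mkQ.restrictScalars k))]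

theorem natCast_torPieceDim (hdd : ∀ i x, dF i (dF (i + 1) x) = 0) (i : ℕ) :
    (torPieceDim k F ℱ dF J i j : ℤ) = Module.finrank k (cyclesPiece k F ℱ dF J i j) -
      Module.finrank k (boundariesPiece k F ℱ dF J i j) := by
  have : Module.Finite k (cyclesPiece k F ℱ dF J i j) := by
    cases i with
    | zero => exact inferInstanceAs (Module.Finite k
        ((ℱ 0 j).map ((J • ⊤ : Submodule R (F 0)).mkQ.restrictScalars k)))
    | succ i => exact Submodule.finiteDimensional_of_le inf_le_left
  exact Nat.cast_sub (Submodule.finrank_mono (boundariesPiece_le_cyclesPiece hdd i j))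

variable [∀ i, DirectSum.Decomposition (ℱ i)] {𝒜 : ℤ → Submodule k R} [GradedAlgebra 𝒜]
  [∀ i, SetLike.GradedSMul 𝒜 (ℱ i)]

theorem torAltSum_eq_sum_neg_one_pow_finrank (hJ : J.IsHomogeneous 𝒜)
    (hdF : ∀ i t, ∀ x ∈ ℱ (i + 1) t, dF i x ∈ ℱ i t) (hdd : ∀ i x, dF i (dF (i + 1) x) = 0)
    (hℓ : ∀ i, ℓ < i → Subsingleton (F i)) :
    torAltSum k F ℱ dF J j = ∑ i ∈ Finset.range (ℓ + 1), (-1 : ℤ) ^ i * Module.finrank k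
      ((ℱ i j).map ((J • ⊤ : Submodule R (F i)).mkQ.restrictScalars k)) := by
  have hsub (i : ℕ) (hi : ℓ < i) : Subsingleton (F i ⧸ (J • ⊤ : Submodule R (F i))) :=
    have := hℓ i hi
    (Submodule.mkQ_surjective _).subsingleton
  have hmap (i : ℕ) := map_eq_inf_range_of_isProj
    (isProj_quotientComponent (isHomogeneous_smul_top (ℱ := ℱ (i + 1)) hJ) j)
    (isProj_quotientComponent (isHomogeneous_smul_top (ℱ := ℱ i) hJ) j)
    (quotientComponent_inducedQuot hJ (dF i) (hdF i) j)
  have htop : (ℱ (ℓ + 1) j).map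
      ((J • ⊤ : Submodule R (F (ℓ + 1))).mkQ.restrictScalars k) = ⊥ := by
    have := hsub (ℓ + 1) ℓ.lt_succ_self
    exact Subsingleton.elim _ _
  have hvanish (i : ℕ) (hi : i ∉ Finset.range (ℓ + 1)) :
      (-1 : ℂ) ^ i * torPieceDim k F ℱ dF J i j = 0 := by
    have := hsub i (by simpa [Nat.lt_succ_iff] using hi)
    rw [torPieceDim, Module.finrank_zero_of_subsingleton, Nat.zero_sub, Nat.cast_zero, mul_zero]
  have hsum : ∑ i ∈ Finset.range (ℓ + 1), (-1 : ℤ) ^ i * torPieceDim k F ℱ dF J i j =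
      ∑ i ∈ Finset.range (ℓ + 1), (-1 : ℤ) ^ i * Module.finrank k
        ((ℱ i j).map ((J • ⊤ : Submodule R (F i)).mkQ.restrictScalars k)) := by
    rw [sum_neg_one_pow_finrank_eq_sum_homology hmap htop, Finset.sum_range_succ', add_comm,
      pow_zero, one_mul]
    simp only [natCast_torPieceDim hdd]
    rfl
  rw [torAltSum, tsum_eq_sum hvanish, ← hsum]
  push_cast
  rfl

end Tor

section ShiftedFree

variable {ι k R c : Type*} [AddCommGroup ι] [Field k] [CommRing R] [Algebra k R]
  (𝒜 : ι → Submodule k R)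

/-- The component of degree `j` of the graded free module `⨁ R(-w b)`, whose basis vector indexed
by `b` has degree `w b`. -/
def shiftedFree (w : c → ι) (j : ι) : Submodule k (c → R) :=
  Submodule.pi Set.univ fun b ↦ 𝒜 (j - w b)

/-- The component of degree `j` of `⨁ R(-w b)` is the product of the components of degree
`j - w b` of `R`. -/
def shiftedFreeEquiv (w : c → ι) (j : ι) : shiftedFree 𝒜 w j ≃ₗ[k] ∀ b, 𝒜 (j - w b) where
  toFun v b := ⟨v.1 b, v.2 b trivial⟩
  invFun v := ⟨fun b ↦ v b, fun b _ ↦ (v b).2⟩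
  map_add' _ _ := rfl
  map_smul' _ _ := rfl

instance finite_shiftedFree [Finite c] [∀ j, Module.Finite k (𝒜 j)] (w : c → ι) (j : ι) :
    Module.Finite k (shiftedFree 𝒜 w j) :=
  .equiv (shiftedFreeEquiv 𝒜 w j).symm

theorem finrank_shiftedFree [Fintype c] [∀ j, Module.Finite k (𝒜 j)] (w : c → ι) (j : ι) :
    Module.finrank k (shiftedFree 𝒜 w j) = ∑ b, Module.finrank k (𝒜 (j - w b)) := by
  rw [(shiftedFreeEquiv 𝒜 w j).finrank_eq, Module.finrank_pi_fintype]

variable [DecidableEq ι] [GradedAlgebra 𝒜]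

/-- The projection of `⨁ R(-w b)` onto its component of degree `j`. -/
def shiftedComponent (w : c → ι) (j : ι) : (c → R) →ₗ[k] (c → R) :=
  LinearMap.piMap fun b ↦ homogeneousComponent 𝒜 (j - w b)

theorem isProj_shiftedComponent (w : c → ι) (j : ι) :
    LinearMap.IsProj (shiftedFree 𝒜 w j) (shiftedComponent 𝒜 w j) where
  map_mem v b _ := homogeneousComponent_mem 𝒜 _ (v b)
  map_id _ hv := funext fun b ↦ homogeneousComponent_of_mem (hv b trivial)

variable {𝒜} [Fintype c]

theorem sum_shiftedComponent_mul {w : c → ι} {E : c → R} {a : ι}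
    (hE : ∀ b, E b ∈ 𝒜 (w b - a)) (j : ι) (v : c → R) :
    ∑ b, shiftedComponent 𝒜 w j v b * E b = homogeneousComponent 𝒜 (j - a) (∑ b, v b * E b) := by
  rw [map_sum]
  refine Finset.sum_congr rfl fun b _ ↦ ?_
  rw [← smul_eq_mul (v b), homogeneousComponent_smul_of_mem_right (𝒜 := 𝒜) (hE b),
    sub_sub_sub_cancel_right]
  rfl

theorem mulVecLin_comp_shiftedComponent {c' : Type*} {w : c → ι} {w' : c' → ι}
    {A : Matrix c' c R} (hA : ∀ i b, A i b ∈ 𝒜 (w b - w' i)) (j : ι) :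
    A.mulVecLin.restrictScalars k ∘ₗ shiftedComponent 𝒜 w j =
      shiftedComponent 𝒜 w' j ∘ₗ A.mulVecLin.restrictScalars k := by
  refine LinearMap.ext fun v ↦ funext fun i ↦ ?_
  change A.mulVec (shiftedComponent 𝒜 w j v) i = homogeneousComponent 𝒜 (j - w' i) (A.mulVec v i)
  simp only [Matrix.mulVec_eq_sum, Finset.sum_apply, Pi.smul_apply, op_smul_eq_smul, smul_eq_mul]
  exact sum_shiftedComponent_mul (fun b ↦ hA i b) j v

end ShiftedFree

section GradedCount

variable {k R : Type*} [Field k] [CommRing R] [Algebra k R] {𝒜 : ℤ → Submodule k R}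
  [GradedAlgebra 𝒜] {φ : R →+* R} {q : ℤ} (hφ : ∀ t, ∀ x ∈ 𝒜 t, φ x ∈ 𝒜 (q * t))
include hφ

theorem coordBaseChange_comp_shiftedComponent {F F' c c' : Type*} [AddCommGroup F] [Module R F]
    [Module k F] [AddCommGroup F'] [Module R F'] [Module k F'] [IsScalarTower k R F']
    {ℱ : ℤ → Submodule k F} {ℱ' : ℤ → Submodule k F'} [DirectSum.Decomposition ℱ']
    [SetLike.GradedSMul 𝒜 ℱ'] [Fintype c] [DecidableEq c] [Fintype c']
    {bas : Module.Basis c R F} {bas' : Module.Basis c' R F'} {w : c → ℤ} {w' : c' → ℤ}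
    (hbas : ∀ b, bas b ∈ ℱ (w b)) (hbas' : ∀ b, bas' b ∈ ℱ' (w' b)) {f : F →ₗ[R] F'}
    (hf : ∀ t, ∀ x ∈ ℱ t, f x ∈ ℱ' t) (j : ℤ) :
    (coordBaseChange φ bas bas' f).restrictScalars k ∘ₗ shiftedComponent 𝒜 (fun b ↦ q * w b) j =
      shiftedComponent 𝒜 (fun b ↦ q * w' b) j ∘ₗ
        (coordBaseChange φ bas bas' f).restrictScalars k := by
  refine mulVecLin_comp_shiftedComponent (fun i b ↦ ?_) j
  rw [← mul_sub, Matrix.map_apply, LinearMap.toMatrix_apply]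
  exact hφ _ _ (repr_mem_of_mem hbas' (hf _ _ (hbas b)) i)

variable {I : Ideal R}

theorem coordAugmentation_comp_shiftedComponent (hI : (I.map φ).IsHomogeneous 𝒜) {c : Type*}
    [Fintype c] {w : c → ℤ} {E : c → R} (hE : ∀ b, E b ∈ 𝒜 (w b)) (j : ℤ) :
    (coordAugmentation φ I E).restrictScalars k ∘ₗ shiftedComponent 𝒜 (fun b ↦ q * w b) j =
      quotientComponent hI j ∘ₗ (coordAugmentation φ I E).restrictScalars k := by
  have haug (v : c → R) : coordAugmentation φ I E v = (I.map φ).mkQ (∑ b, v b * φ (E b)) := by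
    rw [coordAugmentation, Fintype.linearCombination_apply, map_sum]
    rfl
  refine LinearMap.ext fun v ↦ ?_
  have hφE (b : c) : φ (E b) ∈ 𝒜 (q * w b - 0) := (sub_zero (q * w b)).symm ▸ hφ _ _ (hE b)
  change coordAugmentation φ I E (shiftedComponent 𝒜 _ j v) =
    quotientComponent hI j (coordAugmentation φ I E v)
  rw [haug, haug, sum_shiftedComponent_mul hφE, sub_zero, quotientComponent_mk]

theorem finrank_map_mkQ_map_eq_sum [∀ j, Module.Finite k (𝒜 j)] {F : ℕ → Type*}
    [∀ i, AddCommGroup (F i)] [∀ i, Module R (F i)] [∀ i, Module k (F i)]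
    [∀ i, IsScalarTower k R (F i)] {ℱ : ∀ i, ℤ → Submodule k (F i)}
    [∀ i, DirectSum.Decomposition (ℱ i)] [∀ i, SetLike.GradedSMul 𝒜 (ℱ i)]
    {dF : ∀ i, F (i + 1) →ₗ[R] F i} (hdF : ∀ i t, ∀ x ∈ ℱ (i + 1) t, dF i x ∈ ℱ i t)
    {c : ℕ → Type*} [∀ i, Fintype (c i)] [∀ i, DecidableEq (c i)]
    {bas : ∀ i, Module.Basis (c i) R (F i)} {w : ∀ i, c i → ℤ} (hbas : ∀ i b, bas i b ∈ ℱ i (w i b))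
    {E : c 0 → R} (hE : ∀ b, E b ∈ 𝒜 (w 0 b)) (hI : (I.map φ).IsHomogeneous 𝒜)
    (hsurj : Function.Surjective (coordAugmentation φ I E))
    (hex0 : Function.Exact (coordBaseChange φ (bas 1) (bas 0) (dF 0)) (coordAugmentation φ I E))
    (hex : ∀ i, Function.Exact (coordBaseChange φ (bas (i + 2)) (bas (i + 1)) (dF (i + 1)))
      (coordBaseChange φ (bas (i + 1)) (bas i) (dF i)))
    {ℓ : ℕ} [IsEmpty (c (ℓ + 1))] (j : ℤ) :
    (Module.finrank k ((𝒜 j).map ((I.map φ).mkQ.restrictScalars k)) : ℤ) =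
      ∑ i ∈ Finset.range (ℓ + 1), (-1 : ℤ) ^ i *
        ∑ b, (Module.finrank k (𝒜 (j - q * w i b)) : ℤ) := by
  have hmap (i : ℕ) := map_eq_inf_range_of_isProj
    (isProj_shiftedComponent 𝒜 (fun b ↦ q * w (i + 1) b) j)
    (isProj_shiftedComponent 𝒜 (fun b ↦ q * w i b) j)
    (coordBaseChange_comp_shiftedComponent hφ (hbas (i + 1)) (hbas i) (hdF i) j)
  have hmap0 := map_eq_inf_range_of_isProj (isProj_shiftedComponent 𝒜 (fun b ↦ q * w 0 b) j)
    (isProj_quotientComponent hI j) (coordAugmentation_comp_shiftedComponent hφ hI hE j)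
  have hrange : LinearMap.range ((coordAugmentation φ I E).restrictScalars k) = ⊤ :=
    LinearMap.range_eq_top.2 hsurj
  rw [hrange, inf_top_eq] at hmap0
  rw [← hmap0]
  refine (finrank_map_eq_sum_neg_one_pow_finrank (E := fun i ↦ c i → R)
    (D := fun i ↦ (coordBaseChange φ (bas (i + 1)) (bas i) (dF i)).restrictScalars k)
    (V := fun i ↦ shiftedFree 𝒜 (fun b ↦ q * w i b) j)
    (f := (coordAugmentation φ I E).restrictScalars k)
    (ℓ := ℓ) hex0 hex hmap (Subsingleton.elim _ _)).trans ?_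
  simp only [finrank_shiftedFree, Nat.cast_sum]

end GradedCount

section FrobeniusCount

theorem sum_mul_sum_comp_eq_finsum_card {α ι A : Type*} [DecidableEq ι] [CommSemiring A]
    {c : α → Type*} [∀ i, Fintype (c i)] (s : Finset α) (a : α → A) (w : ∀ i, c i → ι) (f : ι → A) :
    ∑ i ∈ s, a i * ∑ b, f (w i b) =
      ∑ᶠ t, (∑ i ∈ s, a i * (Fintype.card {b // w i b = t} : A)) * f t := by
  set T : Finset ι := s.biUnion fun i ↦ Finset.univ.image (w i)
  have hT {i : α} (hi : i ∈ s) (b : c i) : w i b ∈ T :=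
    Finset.mem_biUnion.2 ⟨i, hi, Finset.mem_image_of_mem _ (Finset.mem_univ b)⟩
  rw [finsum_eq_sum_of_support_subset (s := T)]
  · simp only [Finset.sum_mul]
    rw [Finset.sum_comm]
    refine Finset.sum_congr rfl fun i hi ↦ ?_
    simp only [mul_assoc, ← Finset.mul_sum]
    rw [← Finset.sum_fiberwise_of_maps_to fun b _ ↦ hT hi b]
    refine congrArg _ (Finset.sum_congr rfl fun t _ ↦ ?_)
    rw [Finset.sum_congr rfl fun b hb ↦ congrArg f (Finset.mem_filter.1 hb).2, Finset.sum_const,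
      nsmul_eq_mul, Fintype.card_subtype]
  · refine Function.support_subset_iff'.2 fun t ht ↦ ?_
    rw [Finset.sum_eq_zero fun i hi ↦ ?_, zero_mul]
    have : IsEmpty {b // w i b = t} := ⟨fun b ↦ ht (b.2 ▸ hT hi b)⟩
    rw [Fintype.card_eq_zero, Nat.cast_zero, mul_zero]

theorem bracketPow_eq_map_iterateFrobenius {R : Type*} [CommRing R] (I : Ideal R) (p : ℕ)
    [ExpChar R p] (n : ℕ) : bracketPow I (p ^ n) = I.map (iterateFrobenius R p n) :=
  rfl

variable {k R : Type*} [Field k] [CommRing R] [Algebra k R] {𝒜 : ℤ → Submodule k R}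
  [GradedAlgebra 𝒜] [Nontrivial R] (hneg : ∀ t < 0, 𝒜 t = ⊥)
  (hzero : ∀ x ∈ 𝒜 0, ∃ c : k, algebraMap k R c = x) {F : ℕ → Type} [∀ i, AddCommGroup (F i)]
  [∀ i, Module R (F i)] [∀ i, Module k (F i)] [∀ i, IsScalarTower k R (F i)]
  {ℱ : ∀ i, ℤ → Submodule k (F i)} [∀ i, DirectSum.Decomposition (ℱ i)]
  [∀ i, SetLike.GradedSMul 𝒜 (ℱ i)] {dF : ∀ i, F (i + 1) →ₗ[R] F i}
  (hdF : ∀ i t, ∀ x ∈ ℱ (i + 1) t, dF i x ∈ ℱ i t) {ℓ : ℕ}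
  (hℓ : ∀ i, ℓ < i → Subsingleton (F i))

section Betti

variable (hdd : ∀ i x, dF i (dF (i + 1) x) = 0)
include hneg hzero hdF hℓ hdd

theorem torAltSum_irrelevantIdeal_eq_sum_card {c : ℕ → Type*} [∀ i, Fintype (c i)]
    {w : ∀ i, c i → ℤ} {bas : ∀ i, Module.Basis (c i) R (F i)} (hbas : ∀ i b, bas i b ∈ ℱ i (w i b))
    (t : ℤ) :
    torAltSum k F ℱ dF (irrelevantIdeal 𝒜) t =
      ∑ i ∈ Finset.range (ℓ + 1), (-1 : ℂ) ^ i * (Fintype.card {b // w i b = t} : ℂ) := by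
  have htop := (irrelevantIdeal_isMaximal hneg hzero).ne_top
  have hres := exists_sub_algebraMap_mem_irrelevantIdeal hzero
  have (i : ℕ) : Module.Finite k (F i ⧸ (irrelevantIdeal 𝒜 • ⊤ : Submodule R (F i))) :=
    .of_basis (residueBasis (bas i) htop hres)
  have (i : ℕ) : Module.Finite k
      ((ℱ i t).map ((irrelevantIdeal 𝒜 • ⊤ : Submodule R (F i)).mkQ.restrictScalars k)) :=
    FiniteDimensional.finiteDimensional_submodule _
  rw [torAltSum_eq_sum_neg_one_pow_finrank (irrelevantIdeal_isHomogeneous 𝒜) hdF hdd hℓ]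
  push_cast
  exact Finset.sum_congr rfl fun i _ ↦ by
    rw [finrank_map_mkQ_eq_card (irrelevantIdeal_isHomogeneous 𝒜) htop hres (hbas i)]

theorem hasFiniteSupport_torAltSum_irrelevantIdeal [∀ i, Module.Free R (F i)]
    [∀ i, Module.Finite R (F i)] : (torAltSum k F ℱ dF (irrelevantIdeal 𝒜)).HasFiniteSupport := by
  choose m w bas hbas using fun i ↦ exists_homogeneous_basis (F := F i) (ℱ := ℱ i) hneg hzero
  refine ((Finset.range (ℓ + 1)).finite_toSet.biUnion fun i _ ↦ Set.finite_range (w i)).subset ?_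
  refine Function.support_subset_iff'.2 fun t ht ↦ ?_
  rw [torAltSum_irrelevantIdeal_eq_sum_card hneg hzero hdF hℓ hdd hbas]
  refine Finset.sum_eq_zero fun i hi ↦ ?_
  have : IsEmpty {b // w i b = t} :=
    ⟨fun b ↦ ht (Set.mem_iUnion₂.2 ⟨i, hi, b.1, b.2⟩)⟩
  rw [Fintype.card_eq_zero, Nat.cast_zero, mul_zero]

end Betti

include hneg hzero hdF hℓ

theorem finrank_map_mkQ_bracketPow_eq_finsum [Algebra.FiniteType k R] [∀ i, Module.Free R (F i)]
    [∀ i, Module.Finite R (F i)] {I : Ideal R} (hI : I.IsHomogeneous 𝒜) [Module.Finite k (R ⧸ I)]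
    {ε : F 0 →ₗ[R] R ⧸ I}
    (hεdeg : ∀ t, ∀ x ∈ ℱ 0 t, ε x ∈ (𝒜 t).map (Ideal.Quotient.mkₐ k I).toLinearMap)
    (hε : Function.Surjective ε) (hex0 : LinearMap.range (dF 0) = LinearMap.ker ε)
    (hex : ∀ i, LinearMap.range (dF (i + 1)) = LinearMap.ker (dF i)) (p : ℕ) [ExpChar R p] (n : ℕ)
    (j : ℤ) :
    (Module.finrank k ((𝒜 j).map
        ((bracketPow I (p ^ n) • ⊤ : Submodule R R).mkQ.restrictScalars k)) : ℂ) =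
      ∑ᶠ t, torAltSum k F ℱ dF (irrelevantIdeal 𝒜) t *
        Module.finrank k (𝒜 (j - (p ^ n : ℕ) * t)) := by
  have : IsNoetherianRing R := Algebra.FiniteType.isNoetherianRing k R
  have := irrelevantIdeal_isMaximal hneg hzero
  have := finite_graded (k := k) hneg hzero
  choose m w bas hbas using fun i ↦ exists_homogeneous_basis (F := F i) (ℱ := ℱ i) hneg hzero
  choose E hE hεE using fun b ↦ hεdeg _ _ (hbas 0 b)
  have : IsEmpty (Fin (m (ℓ + 1))) :=
    have := hℓ (ℓ + 1) ℓ.lt_succ_self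
    ⟨fun b ↦ (bas (ℓ + 1)).ne_zero b (Subsingleton.elim _ _)⟩
  have hφ (t : ℤ) (x : R) (hx : x ∈ 𝒜 t) : iterateFrobenius R p n x ∈ 𝒜 ((p ^ n : ℕ) * t) :=
    pow_mem_graded hx (p ^ n)
  have hdd (i : ℕ) (x : F (i + 2)) : dF i (dF (i + 1) x) = 0 :=
    (LinearMap.exact_iff.2 (hex i).symm).apply_apply_eq_zero x
  have hcount := finrank_map_mkQ_map_eq_sum hφ hdF hbas hE
    (isHomogeneous_map hI fun x ⟨t, hx⟩ ↦ ⟨_, hφ t x hx⟩)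
    (coordAugmentation_surjective _ hε hεE)
    (exact_coordBaseChange_coordAugmentation _ _ (LinearMap.exact_iff.2 hex0.symm) hε hεE)
    (exact_coordBaseChange_iterateFrobenius p n (irrelevantIdeal_le_radical hI) hex0 hex hℓ bas) j
    (ℓ := ℓ)
  rw [smul_eq_mul, Ideal.mul_top, bracketPow_eq_map_iterateFrobenius, ← Int.cast_natCast, hcount]
  simp only [torAltSum_irrelevantIdeal_eq_sum_card hneg hzero hdF hℓ hdd hbas]
  push_cast
  exact sum_mul_sum_comp_eq_finsum_card _ _ w fun t ↦
    (Module.finrank k (𝒜 (j - (p ^ n : ℕ) * t)) : ℂ)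

end FrobeniusCount

/-! ### Generating functions -/

section Abelian

open Topology Asymptotics

theorem tendsto_tsum_mul_of_tendsto_cofinite {α β : Type*} {l : Filter α} {w : α → β → ℝ}
    {u : β → ℝ} {c : ℝ} (hw0 : ∀ᶠ x in l, ∀ b, 0 ≤ w x b) (hw1 : ∀ᶠ x in l, HasSum (w x) 1)
    (hw : ∀ b, Tendsto (fun x ↦ w x b) l (𝓝 0)) (hu : Tendsto u cofinite (𝓝 c)) :
    Tendsto (fun x ↦ ∑' b, w x b * u b) l (𝓝 c) := by
  refine Metric.tendsto_nhds.2 fun δ hδ ↦ ?_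
  have hfin : {b | ¬dist (u b) c < δ / 2}.Finite := Metric.tendsto_nhds.1 hu _ (half_pos hδ)
  set s := hfin.toFinset
  have hs : ∀ᶠ x in l, ∑ b ∈ s, w x b * |u b - c| < δ / 2 := by
    have := tendsto_finsetSum s fun b _ ↦ (hw b).mul_const |u b - c|
    simp only [zero_mul, Finset.sum_const_zero] at this
    exact this.eventually_lt_const (half_pos hδ)
  filter_upwards [hw0, hw1, hs] with x hx0 hx1 hxs
  have hsplit : ∑' b, w x b * u b - c = ∑' b, w x b * (u b - c) := by
    have h := (hx1.summable.norm.mul_tendsto_const hu).hasSum.sub (hx1.mul_right c)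
    simp only [← mul_sub, one_mul] at h
    exact h.tsum_eq.symm
  have hmajorant : HasSum
      (fun b ↦ w x b * (δ / 2) + (s : Set β).indicator (fun b ↦ w x b * |u b - c|) b)
      (1 * (δ / 2) + ∑ b ∈ s, w x b * |u b - c|) := by
    rw [← Finset.sum_indicator_subset _ subset_rfl]
    exact (hx1.mul_right _).add
      (hasSum_sum_of_ne_finset_zero fun b hb ↦ Set.indicator_of_notMem hb _)
  rw [Real.dist_eq, hsplit, ← Real.norm_eq_abs]
  refine (tsum_of_norm_bounded hmajorant fun b ↦ ?_).trans_lt (by linarith)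
  rw [norm_mul, Real.norm_of_nonneg (hx0 b), Real.norm_eq_abs]
  by_cases hb : b ∈ s
  · rw [Set.indicator_of_mem (Finset.mem_coe.2 hb), le_add_iff_nonneg_left]
    exact mul_nonneg (hx0 b) (half_pos hδ).le
  · rw [Set.indicator_of_notMem (Finset.mem_coe.not.2 hb), add_zero]
    exact mul_le_mul_of_nonneg_left (not_not.1 (hfin.mem_toFinset.not.1 hb)).le (hx0 b)

theorem isEquivalent_add_choose (d : ℕ) :
    (fun n : ℕ ↦ ((n + d).choose d : ℝ)) ~[atTop] fun n ↦ (n : ℝ) ^ d / d.factorial := by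
  have hshift : (fun n : ℕ ↦ ((n + d : ℕ) : ℝ)) ~[atTop] fun n ↦ (n : ℝ) := by
    simp only [Nat.cast_add]
    exact IsEquivalent.refl.add_isLittleO (isLittleO_const_left.2 (.inr
      (tendsto_norm_atTop_atTop.comp tendsto_natCast_atTop_atTop)))
  exact ((isEquivalent_choose d).comp_tendsto (tendsto_add_atTop_nat d)).trans
    ((hshift.pow d).div .refl)

theorem tendsto_div_add_choose {d : ℕ} {S : ℕ → ℝ} {e : ℝ}
    (hS : Tendsto (fun n : ℕ ↦ d.factorial / (n : ℝ) ^ d * S n) atTop (𝓝 e)) :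
    Tendsto (fun n ↦ S n / ((n + d).choose d : ℝ)) atTop (𝓝 e) := by
  refine (IsEquivalent.refl.div (isEquivalent_add_choose d).symm).tendsto_nhds
    (hS.congr fun n ↦ ?_)
  rw [Pi.div_apply, div_div_eq_mul_div, div_mul_eq_mul_div, mul_comm]

theorem add_choose_mul_mul_div_cancel (d n : ℕ) (x s : ℝ) :
    ((n + d).choose d : ℝ) * x * (s / ((n + d).choose d : ℝ)) = s * x := by
  rw [mul_right_comm,
    mul_div_cancel₀ _ (Nat.cast_ne_zero.2 (Nat.choose_pos (Nat.le_add_left d n)).ne')]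

variable {d : ℕ} {S : ℕ → ℝ} {e x : ℝ}
  (hS : Tendsto (fun n : ℕ ↦ d.factorial / (n : ℝ) ^ d * S n) atTop (𝓝 e))
include hS

theorem summable_mul_pow_of_tendsto (hx : ‖x‖ < 1) : Summable fun n ↦ S n * x ^ n := by
  have hx' := (hasSum_choose_mul_geometric_of_norm_lt_one d hx).summable.norm
  have h := hx'.mul_tendsto_const
    ((tendsto_div_add_choose hS).mono_left Nat.cofinite_eq_atTop.le)
  simpa only [add_choose_mul_mul_div_cancel] using h

theorem tendsto_one_sub_pow_mul_tsum :
    Tendsto (fun x ↦ (1 - x) ^ (d + 1) * ∑' n, S n * x ^ n) (𝓝[<] 1) (𝓝 e) := by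
  have hlt : ∀ᶠ x : ℝ in 𝓝[<] 1, x ∈ Set.Ioo 0 1 := Ioo_mem_nhdsLT one_pos
  refine (tendsto_tsum_mul_of_tendsto_cofinite
    (w := fun x n ↦ (1 - x) ^ (d + 1) * (((n + d).choose d : ℝ) * x ^ n)) ?_ ?_ (fun n ↦ ?_)
    ((tendsto_div_add_choose hS).mono_left Nat.cofinite_eq_atTop.le)).congr fun x ↦ ?_
  · filter_upwards [hlt] with x hx n
    have := sub_pos.2 hx.2
    have := hx.1
    positivity
  · filter_upwards [hlt] with x hx
    have h := (hasSum_choose_mul_geometric_of_norm_lt_one d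
      (show ‖x‖ < 1 from abs_lt.2 ⟨by linarith [hx.1], hx.2⟩)).mul_left ((1 - x) ^ (d + 1))
    rwa [mul_one_div_cancel (pow_ne_zero _ (sub_pos.2 hx.2).ne')] at h
  · refine Tendsto.mono_left ?_ nhdsWithin_le_nhds
    refine (by fun_prop : Continuous _).tendsto' _ _ ?_
    rw [sub_self, zero_pow d.succ_ne_zero, zero_mul]
  · simp only [mul_assoc (_ ^ _), add_choose_mul_mul_div_cancel, tsum_mul_left]

end Abelian

section PartialSums

variable {𝕜 : Type*} [NormedField 𝕜]

theorem hasSum_mul_pow_of_hasSum_sum_range {a : ℕ → 𝕜} {x s : 𝕜}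
    (hs : HasSum (fun n ↦ (∑ i ∈ Finset.range (n + 1), a i) * x ^ n) s) :
    HasSum (fun n ↦ a n * x ^ n) ((1 - x) * s) := by
  have hshift : HasSum (fun n ↦ (∑ i ∈ Finset.range n, a i) * x ^ n) (x * s) := by
    rw [← hasSum_nat_add_iff' 1]
    simpa only [Finset.sum_range_one, Finset.sum_range_zero, zero_mul, sub_zero, pow_succ',
      mul_left_comm] using hs.mul_left x
  rw [one_sub_mul]
  simpa only [← sub_mul, Finset.sum_range_succ_sub_sum] using hs.sub hshift

end PartialSums

section GeneratingFunction

open Topology Function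

/-- The generating function `z ↦ ∑ⱼ g j z ^ j` of a sequence indexed by the integers. -/
def generatingFunction (g : ℤ → ℂ) (z : ℂ) : ℂ :=
  ∑' j, g j * z ^ j

/-- The convolution of `h` with the dilation of `B` by the factor `q`, whose generating function is
the product of `z ↦ generatingFunction B (z ^ q)` and `generatingFunction h`. -/
def dilatedConvolution (B h : ℤ → ℂ) (q : ℕ) (j : ℤ) : ℂ :=
  ∑ᶠ t, B t * h (j - q * t)

theorem generatingFunction_eq_sum {g : ℤ → ℂ} {s : Finset ℤ} (hs : g.support ⊆ s) (z : ℂ) :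
    generatingFunction g z = ∑ j ∈ s, g j * z ^ j :=
  tsum_eq_sum fun j hj ↦ by rw [notMem_support.1 fun h ↦ hj (hs h), zero_mul]

theorem analyticOnNhd_generatingFunction {g : ℤ → ℂ} (hg : g.HasFiniteSupport) :
    AnalyticOnNhd ℂ (generatingFunction g) {0}ᶜ := by
  rw [funext (generatingFunction_eq_sum (Set.Finite.coe_toFinset hg).ge)]
  exact fun z hz ↦ Finset.analyticAt_fun_sum _ fun j _ ↦
    analyticAt_const.mul (analyticAt_id.fun_zpow hz)

theorem eqOn_of_frequently_eq_nhdsNE_one {f g : ℂ → ℂ} (hf : AnalyticOnNhd ℂ f {0}ᶜ)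
    (hg : AnalyticOnNhd ℂ g {0}ᶜ) (hfg : ∃ᶠ z in 𝓝[≠] 1, f z = g z) : Set.EqOn f g {0}ᶜ :=
  hf.eqOn_of_preconnected_of_frequently_eq hg
    (isConnected_compl_singleton_of_one_lt_rank (by simp) 0).isPreconnected one_ne_zero hfg

theorem eqOn_zero_generatingFunction {g : ℤ → ℂ} (hg : g.HasFiniteSupport)
    (h1 : ∀ᶠ z in 𝓝 1, generatingFunction g z = 0) : Set.EqOn (generatingFunction g) 0 {0}ᶜ :=
  eqOn_of_frequently_eq_nhdsNE_one (analyticOnNhd_generatingFunction hg) analyticOnNhd_const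
    (h1.filter_mono nhdsWithin_le_nhds).frequently

theorem tendsto_nhdsNE_of_meromorphicAt {𝕜 E : Type*} [NontriviallyNormedField 𝕜]
    [NormedAddCommGroup E] [NormedSpace 𝕜 E] {f : 𝕜 → E} {x : 𝕜} (hf : MeromorphicAt f x)
    {l : Filter 𝕜} [l.NeBot] (hl : l ≤ 𝓝[≠] x) {c : E} (hc : Tendsto f l (𝓝 c)) :
    Tendsto f (𝓝[≠] x) (𝓝 c) := by
  have horder : 0 ≤ meromorphicOrderAt f x := not_lt.1 fun hneg ↦
    hc.not_tendsto (Metric.disjoint_nhds_cobounded c)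
      ((tendsto_cobounded_of_meromorphicOrderAt_neg hneg).mono_left hl)
  obtain ⟨c', hc'⟩ := tendsto_nhds_of_meromorphicOrderAt_nonneg hf horder
  rwa [tendsto_nhds_unique hc (hc'.mono_left hl)]

theorem tendsto_neg_div_natCast_nhdsNE_zero {w : ℂ} (hw : w ≠ 0) :
    Tendsto (fun q : ℕ ↦ -w / q) atTop (𝓝[≠] 0) := by
  refine tendsto_nhdsWithin_iff.2 ⟨tendsto_const_div_atTop_nhds_zero_nat _, ?_⟩
  filter_upwards [eventually_ne_atTop 0] with q hq
  exact div_ne_zero (neg_ne_zero.2 hw) (Nat.cast_ne_zero.2 hq)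

theorem tendsto_natCast_mul_one_sub_exp_neg_div {w : ℂ} (hw : w ≠ 0) :
    Tendsto (fun q : ℕ ↦ q * (1 - exp (-w / q))) atTop (𝓝 w) := by
  have hslope := (hasDerivAt_exp (0 : ℂ)).tendsto_slope.comp
    (tendsto_neg_div_natCast_nhdsNE_zero hw)
  rw [exp_zero] at hslope
  refine (mul_one w ▸ hslope.const_mul w).congr' ?_
  filter_upwards [eventually_ne_atTop 0] with q hq
  have : (q : ℂ) ≠ 0 := Nat.cast_ne_zero.2 hq
  rw [comp_apply, slope_def_field, exp_zero, sub_zero]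
  generalize exp (-w / q) = z
  field_simp
  ring

theorem tendsto_exp_neg_div_natCast_nhdsNE_one {w : ℂ} (hw : w ≠ 0) :
    Tendsto (fun q : ℕ ↦ exp (-w / q)) atTop (𝓝[≠] 1) := by
  refine tendsto_nhdsWithin_iff.2 ⟨?_, ?_⟩
  · simpa only [exp_zero, comp_def] using (continuous_exp.tendsto (0 : ℂ)).comp
      ((tendsto_neg_div_natCast_nhdsNE_zero hw).mono_right nhdsWithin_le_nhds)
  · filter_upwards [(tendsto_natCast_mul_one_sub_exp_neg_div hw).eventually_ne hw] with q hq hone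
    exact hq (by rw [hone, sub_self, mul_zero])

variable {B h : ℤ → ℂ}

theorem eq_zero_of_dilatedConvolution_eq_zero (hB : B.HasFiniteSupport) (h0 : h 0 ≠ 0)
    (hneg : ∀ t < 0, h t = 0) {q : ℕ} (hq : q ≠ 0)
    (hconv : ∀ j < 0, dilatedConvolution B h q j = 0) : ∀ t < 0, B t = 0 := by
  by_contra! hne
  obtain ⟨m, ⟨hm, hBm⟩, hmin⟩ := Set.exists_min_image {t | t < 0 ∧ B t ≠ 0} id
    (Set.Finite.subset hB fun t ht ↦ ht.2) hne
  have hq' : (0 : ℤ) < q := by positivity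
  have hsingle : dilatedConvolution B h q (q * m) = B m * h (q * m - q * m) := by
    refine finsum_eq_single _ _ fun t ht ↦ ?_
    rcases ht.lt_or_gt with ht | ht
    · rw [not_not.1 fun hBt ↦ (hmin t ⟨ht.trans hm, hBt⟩).not_gt ht, zero_mul]
    · rw [hneg _ (sub_neg.2 (mul_lt_mul_of_pos_left ht hq')), mul_zero]
  rw [hconv _ (mul_neg_of_pos_of_neg hq' hm), sub_self] at hsingle
  exact mul_ne_zero hBm h0 hsingle.symm

theorem generatingFunction_dilatedConvolution (hB : B.HasFiniteSupport) {z : ℂ} (hz : z ≠ 0)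
    (hh : Summable fun j : ℤ ↦ h j * z ^ j) (q : ℕ) :
    generatingFunction (dilatedConvolution B h q) z =
      generatingFunction B (z ^ q) * generatingFunction h z := by
  set s : Finset ℤ := Set.Finite.toFinset hB
  have hs : B.support ⊆ s := (Set.Finite.coe_toFinset hB).ge
  have hterm (t : ℤ) : HasSum (fun j ↦ B t * h (j - q * t) * z ^ j)
      (B t * (z ^ q) ^ t * generatingFunction h z) := by
    have hshift := ((Equiv.subRight (q * t : ℤ)).hasSum_iff.2 hh.hasSum).mul_left
      (B t * (z ^ q) ^ t)
    refine hshift.congr_fun fun j ↦ ?_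
    rw [comp_apply, Equiv.subRight_apply, zpow_sub₀ hz, zpow_mul, zpow_natCast]
    field_simp [zpow_ne_zero t (pow_ne_zero q hz)]
  rw [generatingFunction_eq_sum hs, Finset.sum_mul, ← (hasSum_sum fun t _ ↦ hterm t).tsum_eq]
  refine tsum_congr fun j ↦ ?_
  rw [dilatedConvolution, finsum_eq_sum_of_support_subset _
    ((support_mul_subset_left _ _).trans hs), Finset.sum_mul]

section Continuation

variable {l : Filter ℂ} (hl : l ≤ 𝓝[≠] 1) (hB : B.HasFiniteSupport)
  (hh : ∀ᶠ z in l, Summable fun j : ℤ ↦ h j * z ^ j)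
include hl hB hh

theorem eventually_generatingFunction_dilatedConvolution (q : ℕ) :
    ∀ᶠ z in l, generatingFunction (dilatedConvolution B h q) z =
      generatingFunction B (z ^ q) * generatingFunction h z := by
  filter_upwards [hh, hl (mem_nhdsWithin_of_mem_nhds (isOpen_ne.mem_nhds one_ne_zero))]
    with z hz hz0
  exact generatingFunction_dilatedConvolution hB hz0 hz q

variable [l.NeBot]

theorem generatingFunction_dilatedConvolution_mul_comm {q r : ℕ}
    (hq : (dilatedConvolution B h q).HasFiniteSupport)
    (hr : (dilatedConvolution B h r).HasFiniteSupport) {z : ℂ} (hz : z ≠ 0) :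
    generatingFunction (dilatedConvolution B h q) z * generatingFunction B (z ^ r) =
      generatingFunction (dilatedConvolution B h r) z * generatingFunction B (z ^ q) := by
  have hpow (m : ℕ) : AnalyticOnNhd ℂ (fun z ↦ generatingFunction B (z ^ m)) {0}ᶜ :=
    (analyticOnNhd_generatingFunction hB).comp (g := generatingFunction B)
      (fun z _ ↦ analyticAt_id.pow m) fun z hz ↦ pow_ne_zero m hz
  refine eqOn_of_frequently_eq_nhdsNE_one ((analyticOnNhd_generatingFunction hq).mul (hpow r))
    ((analyticOnNhd_generatingFunction hr).mul (hpow q)) ?_ hz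
  refine Frequently.filter_mono (Eventually.frequently ?_) hl
  filter_upwards [eventually_generatingFunction_dilatedConvolution hl hB hh q,
    eventually_generatingFunction_dilatedConvolution hl hB hh r] with z hzq hzr
  rw [hzq, hzr]
  ring

theorem generatingFunction_dilatedConvolution_eq_zero
    (hB0 : ∀ᶠ z in 𝓝 1, generatingFunction B z = 0) {q : ℕ}
    (hq : (dilatedConvolution B h q).HasFiniteSupport) {z : ℂ} (hz : z ≠ 0) :
    generatingFunction (dilatedConvolution B h q) z = 0 := by
  refine eqOn_of_frequently_eq_nhdsNE_one (analyticOnNhd_generatingFunction hq)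
    analyticOnNhd_const (Frequently.filter_mono (Eventually.frequently ?_) hl) hz
  filter_upwards [eventually_generatingFunction_dilatedConvolution hl hB hh q,
    hl (mem_nhdsWithin_of_mem_nhds (isOpen_ne.mem_nhds one_ne_zero))] with z hzq hz0
  rw [hzq, eqOn_zero_generatingFunction hB hB0 (pow_ne_zero q hz0), Pi.zero_apply, zero_mul]

/-- When `B ≠ 0`, the function `f` is the meromorphic continuation of `generatingFunction h` across
`1`; when `B = 0`, any `f` with the right behaviour at `1` will do. -/
theorem exists_continuation {d : ℕ} {e : ℂ}
    (he : Tendsto (fun z ↦ (1 - z) ^ d * generatingFunction h z) l (𝓝 e))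
    (h1 : (dilatedConvolution B h 1).HasFiniteSupport) :
    ∃ f : ℂ → ℂ, Tendsto (fun z ↦ (1 - z) ^ d * f z) (𝓝[≠] 1) (𝓝 e) ∧
      ∀ᶠ z in 𝓝[≠] 1, ∀ q, (dilatedConvolution B h q).HasFiniteSupport →
        generatingFunction (dilatedConvolution B h q) z = generatingFunction B (z ^ q) * f z := by
  have hanalytic (g : ℤ → ℂ) (hg : g.HasFiniteSupport) : AnalyticAt ℂ (generatingFunction g) 1 :=
    analyticOnNhd_generatingFunction hg 1 one_ne_zero
  have hne0 : ∀ᶠ z : ℂ in 𝓝[≠] 1, z ≠ 0 :=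
    mem_nhdsWithin_of_mem_nhds (isOpen_ne.mem_nhds one_ne_zero)
  rcases (hanalytic B hB).eventually_eq_zero_or_eventually_ne_zero with hB0 | hB0
  · refine ⟨fun z ↦ e / (1 - z) ^ d, tendsto_const_nhds.congr' ?_, ?_⟩
    · filter_upwards [self_mem_nhdsWithin] with z hz
      rw [mul_div_cancel₀ _ (pow_ne_zero d (sub_ne_zero.2 (Ne.symm hz)))]
    · filter_upwards [hne0] with z hz q hq
      rw [generatingFunction_dilatedConvolution_eq_zero hl hB hh hB0 hq hz,
        eqOn_zero_generatingFunction hB hB0 (pow_ne_zero q hz), Pi.zero_apply, zero_mul]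
  · refine ⟨fun z ↦ generatingFunction (dilatedConvolution B h 1) z / generatingFunction B z,
      tendsto_nhdsNE_of_meromorphicAt ?_ hl (he.congr' ?_), ?_⟩
    · exact ((analyticAt_const.sub analyticAt_id).pow d).meromorphicAt.mul
        ((hanalytic _ h1).meromorphicAt.div (hanalytic B hB).meromorphicAt)
    · filter_upwards [hl hB0, eventually_generatingFunction_dilatedConvolution hl hB hh 1]
        with z hz hz1
      rw [hz1, pow_one, mul_div_cancel_left₀ _ hz]
    · filter_upwards [hB0, hne0] with z hz hz0 q hq
      rw [mul_div_assoc', eq_div_iff hz, mul_comm (generatingFunction B _),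
        ← generatingFunction_dilatedConvolution_mul_comm hl hB hh hq h1 hz0, pow_one]

theorem tendsto_generatingFunction_dilatedConvolution {d : ℕ} {e : ℂ}
    (he : Tendsto (fun z ↦ (1 - z) ^ d * generatingFunction h z) l (𝓝 e))
    (h1 : (dilatedConvolution B h 1).HasFiniteSupport) {α : Type*} {l' : Filter α} {q : α → ℕ}
    (hq : Tendsto q l' atTop) (hfin : ∀ a, (dilatedConvolution B h (q a)).HasFiniteSupport) {w : ℂ}
    (hw : w ≠ 0) :
    Tendsto
      (fun a ↦ (1 / (q a : ℂ)) ^ d *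
        generatingFunction (dilatedConvolution B h (q a)) (exp (-w / q a))) l'
      (𝓝 (e * generatingFunction B (exp (-w)) / w ^ d)) := by
  obtain ⟨f, hf, hconv⟩ := exists_continuation hl hB hh he h1
  have hz := (tendsto_exp_neg_div_natCast_nhdsNE_one hw).comp hq
  have hlim := ((hf.comp hz).mul_const (generatingFunction B (exp (-w)))).div
    (((tendsto_natCast_mul_one_sub_exp_neg_div hw).comp hq).pow d) (pow_ne_zero d hw)
  refine hlim.congr' ?_
  filter_upwards [hz.eventually hconv, hq.eventually_ne_atTop 0, hz.eventually self_mem_nhdsWithin]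
    with a ha hqa hza
  have hqa' : (q a : ℂ) ≠ 0 := Nat.cast_ne_zero.2 hqa
  have hza' : 1 - exp (-w / q a) ≠ 0 := sub_ne_zero.2 (Ne.symm hza)
  simp only [comp_apply, Pi.div_apply] at ha ⊢
  rw [ha _ (hfin a), ← exp_nat_mul, mul_div_cancel₀ _ hqa', one_div, inv_pow, mul_pow]
  generalize exp (-w / q a) = z at hza' ⊢
  field_simp

end Continuation

section HilbertSeries

variable {d : ℕ} {h : ℤ → ℝ} {e : ℝ} (hneg : ∀ t < 0, h t = 0)
  (hS : Tendsto (fun n : ℕ ↦ d.factorial / (n : ℝ) ^ d * ∑ i ∈ Finset.range (n + 1), h i) atTop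
    (𝓝 e))

theorem map_ofReal_nhdsLT_one_le : map ofReal (𝓝[<] 1) ≤ 𝓝[≠] 1 :=
  tendsto_nhdsWithin_iff.2 ⟨(continuous_ofReal.tendsto' 1 1 ofReal_one).mono_left
    nhdsWithin_le_nhds, by
      filter_upwards [self_mem_nhdsWithin] with x hx
      exact ofReal_ne_one.2 hx.ne⟩

include hneg hS

theorem eventually_hasSum_mul_zpow :
    ∀ᶠ x : ℝ in 𝓝[<] 1, HasSum (fun j : ℤ ↦ (h j : ℂ) * (x : ℂ) ^ j)
      (((1 - x) * ∑' n : ℕ, (∑ i ∈ Finset.range (n + 1), h i) * x ^ n : ℝ) : ℂ) := by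
  filter_upwards [Ioo_mem_nhdsLT (show (-1 : ℝ) < 1 by norm_num)] with x hx
  have hnat := hasSum_ofReal.2 (hasSum_mul_pow_of_hasSum_sum_range
    (summable_mul_pow_of_tendsto hS (abs_lt.2 hx)).hasSum)
  refine (Nat.cast_injective.hasSum_iff fun j hj ↦ ?_).1 (hnat.congr_fun fun n ↦ ?_)
  · rw [hneg j (not_le.1 fun hj0 ↦ hj ⟨j.toNat, Int.toNat_of_nonneg hj0⟩), ofReal_zero, zero_mul]
  · rw [comp_apply, ofReal_mul, ofReal_pow, zpow_natCast]

theorem tendsto_one_sub_pow_mul_generatingFunction :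
    Tendsto (fun z ↦ (1 - z) ^ d * generatingFunction (fun j ↦ h j) z) (map ofReal (𝓝[<] 1))
      (𝓝 e) := by
  refine tendsto_map'_iff.2 ?_
  refine ((continuous_ofReal.tendsto e).comp (tendsto_one_sub_pow_mul_tsum hS)).congr' ?_
  filter_upwards [eventually_hasSum_mul_zpow hneg hS] with x hx
  rw [comp_apply, comp_apply, generatingFunction, hx.tsum_eq]
  push_cast
  ring

end HilbertSeries

end GeneratingFunction

section FrobeniusPoincareSequence

open Topology Function

theorem hsSeq_eq_sum_range {k M : Type*} [Field k] [AddCommGroup M] [Module k M]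
    {ℳ : ℤ → Submodule k M} (hneg : ∀ t < 0, ℳ t = ⊥) (d n : ℕ) :
    hsSeq k ℳ d n =
      d.factorial / (n : ℝ) ^ d * ∑ i ∈ Finset.range (n + 1), (Module.finrank k (ℳ i) : ℝ) := by
  rw [hsSeq, tsum_eq_sum (s := (Finset.range (n + 1)).map Nat.castEmbedding) fun j hj ↦ ?_,
    Finset.sum_map]
  · refine congrArg _ (Finset.sum_congr rfl fun i hi ↦ if_pos ?_)
    exact Int.ofNat_le.2 (Finset.mem_range_succ_iff.1 hi)
  · rcases lt_or_ge j 0 with hj0 | hj0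
    · rw [hneg j hj0, finrank_bot, Nat.cast_zero, ite_self]
    · refine if_neg fun hjn ↦ hj (Finset.mem_map.2 ⟨j.toNat, ?_, Int.toNat_of_nonneg hj0⟩)
      rw [Finset.mem_range]
      omega

theorem FnGen_eq_generatingFunction {k R M : Type*} [Field k] [CommRing R] [Algebra k R]
    [AddCommGroup M] [Module R M] [Module k M] [IsScalarTower k R M]
    (ℳ : ℤ → Submodule k M) (I : Ideal R) (p d n : ℕ) (y : ℂ) :
    FnGen k ℳ I p d n y = (1 / ((p ^ n : ℕ) : ℂ)) ^ d *
      generatingFunction (fun j ↦ Module.finrank k ((ℳ j).map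
        ((bracketPow I (p ^ n) • ⊤ : Submodule R M).mkQ.restrictScalars k)))
        (exp (-(Complex.I * y) / (p ^ n : ℕ))) := by
  simp only [FnGen, generatingFunction, ← exp_int_mul, Nat.cast_pow]
  refine congrArg _ (tsum_congr fun j ↦ congrArg _ (congrArg _ ?_))
  ring

theorem hasFiniteSupport_finrank_map_mkQ_bracketPow {k R : Type*} [Field k] [CommRing R]
    [Nontrivial R] [Algebra k R] [Algebra.FiniteType k R] {𝒜 : ℤ → Submodule k R} [GradedAlgebra 𝒜]
    (hneg : ∀ t < 0, 𝒜 t = ⊥) (hzero : ∀ x ∈ 𝒜 0, ∃ c : k, algebraMap k R c = x) {I : Ideal R}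
    (hI : I.IsHomogeneous 𝒜) [Module.Finite k (R ⧸ I)] (p : ℕ) [ExpChar R p] (n : ℕ) :
    (fun j ↦ (Module.finrank k ((𝒜 j).map
      ((bracketPow I (p ^ n) • ⊤ : Submodule R R).mkQ.restrictScalars k)) :
        ℂ)).HasFiniteSupport := by
  have := irrelevantIdeal_isMaximal hneg hzero
  have hJ : (bracketPow I (p ^ n)).IsHomogeneous 𝒜 :=
    isHomogeneous_map (φ := iterateFrobenius R p n) hI
      fun x ⟨t, hx⟩ ↦ ⟨_, pow_mem_graded hx (p ^ n)⟩
  have hle : I ≤ (bracketPow I (p ^ n)).radical := fun x hx ↦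
    ⟨p ^ n, Ideal.subset_span (Set.mem_image_of_mem _ hx)⟩
  have : Module.Finite k (R ⧸ bracketPow I (p ^ n)) := finite_quotient_of_le_radical
    ((irrelevantIdeal_le_radical hI).trans (Ideal.radical_le_radical_iff.2 hle))
  rw [smul_eq_mul, Ideal.mul_top]
  refine (finite_setOf_map_mkQ_ne_bot hJ).subset fun j hj hbot ↦ hj ?_
  dsimp only
  rw [hbot, finrank_bot, Nat.cast_zero]

theorem tendsto_FnGen_of_eq_dilatedConvolution {k R : Type*} [Field k] [CommRing R] [Algebra k R]
    {𝒜 : ℤ → Submodule k R} (hneg : ∀ t < 0, 𝒜 t = ⊥) {I : Ideal R} {p : ℕ} (hp : 1 < p) {B : ℤ → ℂ}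
    (hB : B.HasFiniteSupport)
    (hfin : ∀ n, (fun j ↦ (Module.finrank k ((𝒜 j).map
      ((bracketPow I (p ^ n) • ⊤ : Submodule R R).mkQ.restrictScalars k)) : ℂ)).HasFiniteSupport)
    (hconv : ∀ n j, (Module.finrank k ((𝒜 j).map
      ((bracketPow I (p ^ n) • ⊤ : Submodule R R).mkQ.restrictScalars k)) : ℂ) =
        dilatedConvolution B (fun j ↦ Module.finrank k (𝒜 j)) (p ^ n) j)
    {d : ℕ} {e : ℝ} (he : Tendsto (fun n ↦ hsSeq k 𝒜 d n) atTop (𝓝 e)) {y : ℂ} (hy : y ≠ 0) :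
    Tendsto (fun n ↦ FnGen k 𝒜 I p d n y) atTop
      (𝓝 (e * generatingFunction B (exp (-(Complex.I * y))) / (Complex.I * y) ^ d)) := by
  have hneg' (t : ℤ) (ht : t < 0) : (Module.finrank k (𝒜 t) : ℝ) = 0 := by
    rw [hneg t ht, finrank_bot, Nat.cast_zero]
  simp only [hsSeq_eq_sum_range hneg] at he
  simp only [FnGen_eq_generatingFunction, hconv] at hfin ⊢
  refine tendsto_generatingFunction_dilatedConvolution map_ofReal_nhdsLT_one_le hB
    (eventually_map.2 ?_) ?_ ?_ (tendsto_pow_atTop_atTop_of_one_lt hp) hfin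
    (mul_ne_zero I_ne_zero hy)
  · filter_upwards [eventually_hasSum_mul_zpow hneg' he] with x hx
    simpa only [ofReal_natCast] using hx.summable
  · simpa only [ofReal_natCast] using tendsto_one_sub_pow_mul_generatingFunction hneg' he
  · simpa only [pow_zero] using hfin 0

theorem eq_zero_of_finrank_eq_dilatedConvolution {k R : Type*} [Field k] [CommRing R] [Nontrivial R]
    [Algebra k R] {𝒜 : ℤ → Submodule k R} [SetLike.GradedOne 𝒜] [Module.Finite k (𝒜 0)]
    (hneg : ∀ t < 0, 𝒜 t = ⊥) {V : Type*} [AddCommGroup V] [Module k V] (f : R →ₗ[k] V) {B : ℤ → ℂ}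
    (hB : B.HasFiniteSupport) {q : ℕ} (hq : q ≠ 0)
    (hconv : ∀ j, (Module.finrank k ((𝒜 j).map f) : ℂ) =
      dilatedConvolution B (fun j ↦ Module.finrank k (𝒜 j)) q j) : ∀ t < 0, B t = 0 := by
  refine eq_zero_of_dilatedConvolution_eq_zero (h := fun j ↦ Module.finrank k (𝒜 j)) hB
    (Nat.cast_ne_zero.2 ?_) (fun t ht ↦ ?_) hq
    fun j hj ↦ ?_
  · have : 𝒜 0 ≠ ⊥ := (Submodule.ne_bot_iff _).2 ⟨1, SetLike.GradedOne.one_mem, one_ne_zero⟩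
    exact Nat.one_le_iff_ne_zero.1 (Submodule.one_le_finrank_iff.2 this)
  · rw [hneg t ht, finrank_bot, Nat.cast_zero]
  · rw [← hconv, hneg j hj, Submodule.map_bot, finrank_bot, Nat.cast_zero]

end FrobeniusPoincareSequence

end FrobeniusPoincare

open FrobeniusPoincare in
theorem frobenius_poincare_finite_projective_dimension_general {k R : Type*} [Field k] [CommRing R]
    [Algebra k R] [Algebra.FiniteType k R] {p : ℕ} (hp : p.Prime) [CharP R p]
    {𝒜 : ℤ → Submodule k R} [GradedAlgebra 𝒜] (h𝒜neg : ∀ t < 0, 𝒜 t = ⊥)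
    (h𝒜zero : ∀ x ∈ 𝒜 0, ∃ c : k, algebraMap k R c = x) {I : Ideal R} (hI : I.IsHomogeneous 𝒜)
    (hIfl : IsFiniteLength R (R ⧸ I)) {F : ℕ → Type} [∀ i, AddCommGroup (F i)]
    [∀ i, Module R (F i)] [∀ i, Module k (F i)] [∀ i, IsScalarTower k R (F i)]
    [∀ i, Module.Free R (F i)] [∀ i, Module.Finite R (F i)] {ℱ : ∀ i, ℤ → Submodule k (F i)}
    [∀ i, DirectSum.Decomposition (ℱ i)]
    (hℱ : ∀ i a b, ∀ r ∈ 𝒜 a, ∀ x ∈ ℱ i b, r • x ∈ ℱ i (a + b))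
    {dF : ∀ i, F (i + 1) →ₗ[R] F i} {ε : F 0 →ₗ[R] R ⧸ I}
    (hdFdeg : ∀ i t, ∀ x ∈ ℱ (i + 1) t, dF i x ∈ ℱ i t)
    (hεdeg : ∀ t, ∀ x ∈ ℱ 0 t, ε x ∈ (𝒜 t).map (Ideal.Quotient.mkₐ k I).toLinearMap)
    (hεsurj : Function.Surjective ε) (hex0 : LinearMap.range (dF 0) = LinearMap.ker ε)
    (hex : ∀ i, LinearMap.range (dF (i + 1)) = LinearMap.ker (dF i)) {ℓ : ℕ}
    (hfinres : ∀ i, ℓ < i → Subsingleton (F i)) {b : ℤ}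
    (hb : ∀ j, b < j → torAltSum k F ℱ dF (irrelevantIdeal 𝒜) j = 0) {d : ℕ} {e : ℝ}
    (he : Tendsto (fun n ↦ hsSeq k 𝒜 d n) atTop (nhds e)) {y : ℂ} (hy : y ≠ 0) :
    Tendsto (fun n ↦ FnGen k 𝒜 I p d n y) atTop (nhds ((e : ℂ) *
      (∑ j ∈ Finset.Icc 0 b, torAltSum k F ℱ dF (irrelevantIdeal 𝒜) j *
        exp (-Complex.I * y * (j : ℂ))) / (Complex.I * y) ^ d)) := by
  have : Nontrivial R := CharP.nontrivial_of_char_ne_one hp.ne_one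
  have : ExpChar R p := .prime hp
  have : Module.Finite k (R ⧸ I) := finite_quotient_of_isFiniteLength hIfl
  have (i : ℕ) : SetLike.GradedSMul 𝒜 (ℱ i) := ⟨fun _ _ _ _ hr hx ↦ hℱ i _ _ _ hr _ hx⟩
  set B : ℤ → ℂ := torAltSum k F ℱ dF (irrelevantIdeal 𝒜)
  have hB : B.HasFiniteSupport := hasFiniteSupport_torAltSum_irrelevantIdeal h𝒜neg h𝒜zero hdFdeg
    hfinres fun i x ↦ (LinearMap.exact_iff.2 (hex i).symm).apply_apply_eq_zero x
  have hconv := finrank_map_mkQ_bracketPow_eq_finsum h𝒜neg h𝒜zero hdFdeg hfinres hI hεdeg hεsurj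
    hex0 hex p
  have := finite_graded h𝒜neg h𝒜zero 0
  have hBsupp : B.support ⊆ Finset.Icc 0 b := fun j hj ↦ Finset.mem_coe.2 <| Finset.mem_Icc.2
    ⟨not_lt.1 fun hj0 ↦ hj (eq_zero_of_finrank_eq_dilatedConvolution h𝒜neg _ hB
      (pow_ne_zero 0 hp.ne_zero) (hconv 0) j hj0), not_lt.1 fun hbj ↦ hj (hb j hbj)⟩
  have hGF : ∑ j ∈ Finset.Icc 0 b, B j * exp (-Complex.I * y * j) =
      generatingFunction B (exp (-(Complex.I * y))) := by
    simp only [generatingFunction_eq_sum hBsupp, ← exp_int_mul, mul_comm (Int.cast _), neg_mul]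
  rw [hGF]
  exact tendsto_FnGen_of_eq_dilatedConvolution h𝒜neg hp.one_lt hB
    (hasFiniteSupport_finrank_map_mkQ_bracketPow h𝒜neg h𝒜zero hI p) hconv he hy

/-- **Frobenius–Poincaré functions in the finite projective dimension case.**
If `R/I` has finite projective dimension — witnessed by a finite graded free resolution
`F_•` of `R/I` — and `𝔹(j) = Σ_α (-1)^α λ_k(Tor_α^R(k, R/I)_j)` vanishes for `j > b`
with `b` least such, then `F(R,R,I)(y) = e_R (Σ_{j=0}^{b} 𝔹(j)e^{-iyj})/(iy)^d`
for all `y ≠ 0`.  Here `Tor_α^R(k, R/I)` is computed as `H_α(F_• ⧸ 𝔪 F_•)` where `𝔪` is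
the maximal homogeneous ideal of `R`. -/
theorem frobenius_poincare_finite_projective_dimension
    (k R : Type) [Field k] [CommRing R] [Algebra k R] [Algebra.FiniteType k R]
    (p : ℕ) (hp : p.Prime) [CharP R p]
    (𝒜 : ℤ → Submodule k R) [GradedAlgebra 𝒜]
    (h𝒜neg : ∀ t : ℤ, t < 0 → 𝒜 t = ⊥)
    (h𝒜zero : ∀ x ∈ 𝒜 0, ∃ c : k, algebraMap k R c = x)
    (d : ℕ) (hd : ringKrullDim R = d)
    (I : Ideal R) (hI : Ideal.IsHomogeneous 𝒜 I) (hIfl : IsFiniteLength R (R ⧸ I))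
    -- a finite graded free resolution `F_• → R/I`, witnessing finite projective dimension
    (F : ℕ → Type) [∀ i, AddCommGroup (F i)] [∀ i, Module R (F i)]
    [∀ i, Module k (F i)] [∀ i, IsScalarTower k R (F i)]
    [∀ i, Module.Free R (F i)] [∀ i, Module.Finite R (F i)]
    (ℱ : ∀ i, ℤ → Submodule k (F i)) [∀ i, DirectSum.Decomposition (ℱ i)]
    (hℱ : ∀ (i : ℕ) (a b : ℤ), ∀ r ∈ 𝒜 a, ∀ x ∈ ℱ i b, r • x ∈ ℱ i (a + b))
    (dF : ∀ i, F (i + 1) →ₗ[R] F i) (ε : F 0 →ₗ[R] R ⧸ I)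
    (hdFdeg : ∀ (i : ℕ) (t : ℤ), ∀ x ∈ ℱ (i + 1) t, dF i x ∈ ℱ i t)
    (hεdeg : ∀ t : ℤ, ∀ x ∈ ℱ 0 t,
      ε x ∈ (𝒜 t).map (Ideal.Quotient.mkₐ k I).toLinearMap)
    (hεsurj : Function.Surjective ε)
    (hex0 : LinearMap.range (dF 0) = LinearMap.ker ε)
    (hex : ∀ i : ℕ, LinearMap.range (dF (i + 1)) = LinearMap.ker (dF i))
    (ℓ : ℕ) (hfinres : ∀ i : ℕ, ℓ < i → Subsingleton (F i))
    -- the number `b`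
    (b : ℤ)
    (hb : ∀ j : ℤ, b < j →
      torAltSum k F ℱ dF (Ideal.span {x : R | ∃ t : ℤ, t ≠ 0 ∧ x ∈ 𝒜 t}) j = 0)
    (hbmin : ∀ b' : ℤ, (∀ j : ℤ, b' < j →
      torAltSum k F ℱ dF (Ideal.span {x : R | ∃ t : ℤ, t ≠ 0 ∧ x ∈ 𝒜 t}) j = 0) → b ≤ b')
    -- the Hilbert–Samuel multiplicity
    (e : ℝ) (he : Tendsto (fun n : ℕ => hsSeq k 𝒜 d n) atTop (nhds e))
    (y : ℂ) (hy : y ≠ 0)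
    (L : ℂ) (hL : Tendsto (fun n : ℕ => FnGen k 𝒜 I p d n y) atTop (nhds L)) :
    L = (e : ℂ) *
        (∑ j ∈ Finset.Icc (0 : ℤ) b,
          torAltSum k F ℱ dF (Ideal.span {x : R | ∃ t : ℤ, t ≠ 0 ∧ x ∈ 𝒜 t}) j *
            Complex.exp (-Complex.I * y * (j : ℂ))) /
        (Complex.I * y) ^ d :=
  tendsto_nhds_unique hL (frobenius_poincare_finite_projective_dimension_general hp h𝒜neg
    h𝒜zero hI hIfl hℱ hdFdeg hεdeg hεsurj hex0 hex hfinres hb he hy)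

end
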